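/- arXiv:1612.00401 — 2 statements merged into one kernel-verified Lean document; each statement's English description precedes it below -/
import Mathlib

section
/- Let d₁, d₂ be positive integers with d₁d₂ ≥ 2, N = d₁d₂, and let U be Haar-distributed on U(N). With ρ₀, ρ₁ the partial traces over the second factor of the projectors onto the 0-th and 1-st columns of U, one has E[(Tr(ρ₀ρ₁))²] = (d₂²−1)·(d₁(6d₂ + d₁(d₂²(d₁d₂+5) − 2)) + 2) / (d₁d₂(d₁d₂−1)(d₁d₂+1)(d₁d₂+2)(d₁d₂+3)). -/
/-!
Write `ψᵢ` for the `i`-th column of `U` reshaped as a `d₁ × d₂` matrix, so that `ρᵢ = ψᵢ ψᵢᴴ`, and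
put `N = d₁d₂`. The moment is computed by integration by parts on the unitary group.

The unitary group is compact, so Haar probability measure is unique and hence right invariant
(`integral_mul_right_unitary`). Rotating two columns `c ≠ j` by an angle `t` with phase `z`,
`|z| = 1`, is right multiplication by a unitary `R(t)`, so `t ↦ E f(U R(t))` is constant and its
derivative at `0` vanishes. At first order `ψ_c ↦ ψ_c + t z ψ_j` and `ψ_j ↦ ψ_j - t z̄ ψ_c`, so the
derivative is of the form `z P + z̄ Q`. Combining `z = 1` with `z = i` isolates `E P = 0` (`stein`):
in `P`, each `ψ_c` is replaced in turn by `ψ_j`, and each `ψ_jᴴ` by `-ψ_cᴴ`.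

This is applied to functions linear in `ψ_jᴴ` and summed over `j`. Since the columns of `U` form an
orthonormal basis, the sums over `j` can be evaluated (`sum_tr`, `sum_tr_mul_tr`, `col_orth`), and
the result is a closed system of relations. With `A = ψᵢ ψᵢᴴ`, `t₂ = Tr A²`, `t₃ = Tr A³`,
`X = Tr (A ψ_c ψ_cᴴ)` for a second column `c ≠ i`, and `q` the quantity `quad`, they read

* `(N + 1) E t₂ = d₁ + d₂` (`int_e2`),
* `(N + 2) E t₃ = (d₁ + d₂) E t₂ + 1` (`int_e3`),
* `(N + 3) E t₂² = (d₁ + d₂) E t₂ + 2 E t₃` (`int_e22`),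
* `N E X² = E q` (`int_ovl_sq`),
* `(N - 1) E q = d₂² - d₂ E t₂ - 2 E t₃ + 2 E t₂²` (`int_quad`).

For the last two, only column `c` is rotated, against the columns `j ∉ {c, i}`, so `A` stays fixed.
Solving this triangular system for `E X²` gives the formula.
-/

open Matrix MeasureTheory

instance matrixMeasurableSpace {m n α : Type*} [MeasurableSpace α] :
    MeasurableSpace (Matrix m n α) :=
  inferInstanceAs (MeasurableSpace (m → n → α))

/-- For a unitary matrix `U` of size `d₁d₂` and a column index `i`, `rho U i` is the
partial trace over the second tensor factor of the rank-one projector onto the `i`-th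
column of `U`: `(rho U i) a b = ∑ k, U_{(a,k),i} * conj (U_{(b,k),i})`. -/
noncomputable def rho {d₁ d₂ : ℕ} (U : Matrix.unitaryGroup (Fin (d₁ * d₂)) ℂ)
    (i : Fin (d₁ * d₂)) : Matrix (Fin d₁) (Fin d₁) ℂ :=
  Matrix.of fun a b => ∑ k : Fin d₂,
    (U : Matrix (Fin (d₁ * d₂)) (Fin (d₁ * d₂)) ℂ) (finProdFinEquiv (a, k)) i *
      (starRingEnd ℂ) ((U : Matrix (Fin (d₁ * d₂)) (Fin (d₁ * d₂)) ℂ) (finProdFinEquiv (b, k)) i)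

open scoped ComplexConjugate

/-! ### Differentiation under the integral sign -/

section Smooth
variable {X : Type*} [TopologicalSpace X] {l m n : Type*}

/-- `S1 f f'`: the family `t ↦ f t x` is differentiable with derivative `f' t x`, and both `f` and
`f'` are jointly continuous in `(t, x)`. -/
structure S1 (f f' : ℝ → X → ℂ) : Prop where
  cont : Continuous fun p : ℝ × X => f p.1 p.2
  cont' : Continuous fun p : ℝ × X => f' p.1 p.2
  deriv : ∀ t x, HasDerivAt (fun s => f s x) (f' t x) t

/-- The entrywise version of `S1` for matrix-valued families. -/
def C1 (A A' : ℝ → X → Matrix m n ℂ) : Prop :=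
  ∀ i j, S1 (fun t x => A t x i j) (fun t x => A' t x i j)

theorem S1.add {f f' g g' : ℝ → X → ℂ} (hf : S1 f f') (hg : S1 g g') :
    S1 (fun t x => f t x + g t x) (fun t x => f' t x + g' t x) :=
  ⟨hf.cont.add hg.cont, hf.cont'.add hg.cont', fun t x => (hf.deriv t x).add (hg.deriv t x)⟩

theorem S1.sub {f f' g g' : ℝ → X → ℂ} (hf : S1 f f') (hg : S1 g g') :
    S1 (fun t x => f t x - g t x) (fun t x => f' t x - g' t x) :=
  ⟨hf.cont.sub hg.cont, hf.cont'.sub hg.cont', fun t x => (hf.deriv t x).sub (hg.deriv t x)⟩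

theorem S1.mul {f f' g g' : ℝ → X → ℂ} (hf : S1 f f') (hg : S1 g g') :
    S1 (fun t x => f t x * g t x) (fun t x => f' t x * g t x + f t x * g' t x) :=
  ⟨hf.cont.mul hg.cont, (hf.cont'.mul hg.cont).add (hf.cont.mul hg.cont'),
    fun t x => (hf.deriv t x).mul (hg.deriv t x)⟩

theorem S1.sum {ι : Type*} {s : Finset ι} {f f' : ι → ℝ → X → ℂ} (hf : ∀ i, S1 (f i) (f' i)) :
    S1 (fun t x => ∑ i ∈ s, f i t x) (fun t x => ∑ i ∈ s, f' i t x) :=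
  ⟨continuous_finsetSum _ fun i _ => (hf i).cont,
    continuous_finsetSum _ fun i _ => (hf i).cont',
    fun t x => HasDerivAt.fun_sum fun i _ => (hf i).deriv t x⟩

theorem S1.star {f f' : ℝ → X → ℂ} (hf : S1 f f') :
    S1 (fun t x => star (f t x)) (fun t x => star (f' t x)) :=
  ⟨continuous_star.comp hf.cont, continuous_star.comp hf.cont', fun t x => (hf.deriv t x).star⟩

theorem S1.const (k : ℂ) : S1 (fun (_ : ℝ) (_ : X) => k) (fun _ _ => 0) :=
  ⟨continuous_const, continuous_const, fun _ _ => hasDerivAt_const _ _⟩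

theorem C1.mul [Fintype m] {A A' : ℝ → X → Matrix l m ℂ} {B B' : ℝ → X → Matrix m n ℂ}
    (hA : C1 A A') (hB : C1 B B') :
    C1 (fun t x => A t x * B t x) (fun t x => A' t x * B t x + A t x * B' t x) := by
  intro i j
  simp only [Matrix.mul_apply, Matrix.add_apply, ← Finset.sum_add_distrib]
  exact S1.sum fun k => (hA i k).mul (hB k j)

theorem C1.ct {A A' : ℝ → X → Matrix l m ℂ} (hA : C1 A A') :
    C1 (fun t x => (A t x)ᴴ) (fun t x => (A' t x)ᴴ) :=
  fun i j => (hA j i).star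

theorem C1.tr [Fintype m] {A A' : ℝ → X → Matrix m m ℂ} (hA : C1 A A') :
    S1 (fun t x => (A t x).trace) (fun t x => (A' t x).trace) :=
  S1.sum fun k => hA k k

/-- On a compact space, if `∫ f t` does not depend on `t`, then its derivative `∫ f' 0` at `t = 0`
is zero. -/
theorem S1.integral_zero [CompactSpace X] [SecondCountableTopology X] [MeasurableSpace X]
    [BorelSpace X] (μ : Measure X) [IsFiniteMeasure μ] {f f' : ℝ → X → ℂ} (h : S1 f f')
    (hc : ∀ t, ∫ x, f t x ∂μ = ∫ x, f 0 x ∂μ) : ∫ x, f' 0 x ∂μ = 0 := by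
  have intg : ∀ g : X → ℂ, Continuous g → Integrable g μ := fun g hg =>
    hg.integrable_of_hasCompactSupport (HasCompactSupport.of_compactSpace g)
  obtain ⟨C, hC⟩ := ((isCompact_Icc (a := (-1 : ℝ)) (b := 1)).prod
    (isCompact_univ (X := X))).exists_bound_of_continuousOn h.cont'.continuousOn
  have h1 := (hasDerivAt_integral_of_dominated_loc_of_deriv_le (μ := μ) (F := f) (F' := f')
    (x₀ := (0 : ℝ)) (s := Set.Icc (-1) 1) (bound := fun _ => C)
    (Icc_mem_nhds (by norm_num) (by norm_num))
    (Filter.Eventually.of_forall fun t =>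
      (h.cont.comp (Continuous.prodMk_right t)).aestronglyMeasurable)
    (intg _ (h.cont.comp (Continuous.prodMk_right 0)))
    (h.cont'.comp (Continuous.prodMk_right 0)).aestronglyMeasurable
    (Filter.Eventually.of_forall fun x t ht => hC (t, x) ⟨ht, trivial⟩)
    (integrable_const _)
    (Filter.Eventually.of_forall fun x t _ => h.deriv t x)).2
  have h2 : (fun t => ∫ x, f t x ∂μ) = fun _ => ∫ x, f 0 x ∂μ := funext hc
  rw [h2] at h1
  exact h1.unique (hasDerivAt_const _ _)

end Smooth

/-! ### The unitary group: topology, invariance of Haar measure, plane rotations -/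

section Unitary
variable {n : Type*} [Fintype n] [DecidableEq n]

instance matrixBorelSpace : BorelSpace (Matrix n n ℂ) := inferInstanceAs (BorelSpace (n → n → ℂ))

instance matrixSecondCountable : SecondCountableTopology (Matrix n n ℂ) :=
  inferInstanceAs (SecondCountableTopology (n → n → ℂ))

instance unitaryGroupSecondCountable : SecondCountableTopology (Matrix.unitaryGroup n ℂ) :=
  TopologicalSpace.Subtype.secondCountableTopology
    ((Matrix.unitaryGroup n ℂ : Submonoid _) : Set (Matrix n n ℂ))

instance unitaryGroupBorel : BorelSpace (Matrix.unitaryGroup n ℂ) :=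
  inferInstanceAs (BorelSpace {x : Matrix n n ℂ // x ∈ Matrix.unitaryGroup n ℂ})

instance unitaryGroupCompact : CompactSpace (Matrix.unitaryGroup n ℂ) := by
  have hK : IsCompact (Set.univ.pi fun _ : n => Set.univ.pi fun _ : n =>
      Metric.closedBall (0 : ℂ) 1) :=
    isCompact_univ_pi fun _ => isCompact_univ_pi fun _ => isCompact_closedBall _ _
  have hcl : IsClosed {U : Matrix n n ℂ | U * star U = 1} :=
    isClosed_eq (continuous_id.matrix_mul continuous_star) continuous_const
  have hset : ((Matrix.unitaryGroup n ℂ : Submonoid _) : Set (Matrix n n ℂ)) =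
      {U | U * star U = 1} := by
    ext U
    exact Matrix.mem_unitaryGroup_iff
  have h2 : IsCompact ((Matrix.unitaryGroup n ℂ : Submonoid _) : Set (Matrix n n ℂ)) := by
    refine IsCompact.of_isClosed_subset (X := Matrix n n ℂ) hK (hset ▸ hcl) ?_
    intro U hU i _ j _
    simpa using entry_norm_bound_of_unitary hU i j
  exact isCompact_iff_compactSpace.mp h2

/-- Haar probability measure on the unitary group is also right invariant: by compactness, its right
translates are left-invariant probability measures, and there is only one of those. -/
theorem integral_mul_right_unitary (μ : Measure (Matrix.unitaryGroup n ℂ)) [μ.IsHaarMeasure]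
    [IsProbabilityMeasure μ] (f : Matrix.unitaryGroup n ℂ → ℂ) (g : Matrix.unitaryGroup n ℂ) :
    ∫ U, f (U * g) ∂μ = ∫ U, f U ∂μ := by
  have h1 : (μ.map (· * g)) = μ := by
    have : IsProbabilityMeasure (μ.map (· * g)) :=
      Measure.isProbabilityMeasure_map (measurable_mul_const g).aemeasurable
    exact Measure.isHaarMeasure_eq_of_isProbabilityMeasure _ _
  conv_rhs => rw [← h1]
  exact ((Homeomorph.mulRight g).measurableEmbedding.integral_map f).symm

/-- The skew-Hermitian matrix `z e_j e_cᵀ - z̄ e_c e_jᵀ`. For `|z| = 1` and `c ≠ j` it generates the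
rotations of the coordinates `c` and `j` with phase `z`. -/
def genY (z : ℂ) (c j : n) : Matrix n n ℂ := Matrix.single j c z - Matrix.single c j (conj z)

/-- For `c ≠ j`, the projection onto the coordinate plane spanned by `e_c` and `e_j`. -/
def genQ (c j : n) : Matrix n n ℂ := Matrix.single c c 1 + Matrix.single j j 1

theorem genQ_mul_genQ {c j : n} (h : c ≠ j) : genQ c j * genQ c j = genQ c j := by
  simp [genQ, mul_add, add_mul, h, h.symm]

theorem genQ_mul_genY (z : ℂ) {c j : n} (h : c ≠ j) : genQ c j * genY z c j = genY z c j := by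
  simp [genQ, genY, mul_sub, add_mul, h, h.symm]

theorem genY_mul_genQ (z : ℂ) {c j : n} (h : c ≠ j) : genY z c j * genQ c j = genY z c j := by
  simp [genQ, genY, mul_add, add_mul, h, h.symm, sub_eq_add_neg]

theorem genY_mul_genY {z : ℂ} (hz : z * conj z = 1) {c j : n} (h : c ≠ j) :
    genY z c j * genY z c j = - genQ c j := by
  have hz' : conj z * z = 1 := by rw [mul_comm, hz]
  simp [genQ, genY, mul_sub, sub_mul, h, h.symm, hz, hz']
  abel

/-- The rotation `exp (t genY z c j)`, in closed form: since `genY² = -genQ`, the exponential series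
sums to `1 + (cos t - 1) genQ + sin t genY`. -/
noncomputable def rotM (z : ℂ) (c j : n) (t : ℝ) : Matrix n n ℂ :=
  1 + ((Real.cos t : ℂ) - 1) • genQ c j + (Real.sin t : ℂ) • genY z c j

theorem rotM_mem {z : ℂ} (hz : z * conj z = 1) {c j : n} (h : c ≠ j) (t : ℝ) :
    rotM z c j t ∈ Matrix.unitaryGroup n ℂ := by
  rw [Matrix.mem_unitaryGroup_iff]
  have hs : star (rotM z c j t) =
      1 + ((Real.cos t : ℂ) - 1) • genQ c j - (Real.sin t : ℂ) • genY z c j := by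
    rw [Matrix.star_eq_conjTranspose]
    have hY : (genY z c j)ᴴ = - genY z c j := by
      simp only [genY, Matrix.conjTranspose_sub, Matrix.conjTranspose_single, starRingEnd_apply,
        star_star, neg_sub]
    have hQ : (genQ c j)ᴴ = genQ c j := by
      simp [genQ, Matrix.conjTranspose_add, Matrix.conjTranspose_single]
    simp only [rotM, Matrix.conjTranspose_add, Matrix.conjTranspose_smul, hY, hQ,
      Matrix.conjTranspose_one]
    simp [-Complex.ofReal_cos, -Complex.ofReal_sin, sub_eq_add_neg]
  rw [hs, rotM]
  simp only [mul_add, mul_sub, add_mul, mul_one, one_mul, Matrix.smul_mul, Matrix.mul_smul,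
    genQ_mul_genQ h, genQ_mul_genY z h, genY_mul_genQ z h, genY_mul_genY hz h]
  have hcs : (Real.cos t : ℂ) ^ 2 + (Real.sin t : ℂ) ^ 2 = 1 := by
    have := Real.cos_sq_add_sin_sq t
    exact_mod_cast this
  generalize (Real.cos t : ℂ) = a at *
  generalize (Real.sin t : ℂ) = b at *
  match_scalars
  · ring
  · linear_combination hcs
  · ring

/-- `rotM` as an element of the unitary group. -/
noncomputable def rot {z : ℂ} (hz : z * conj z = 1) {c j : n} (h : c ≠ j) (t : ℝ) :
    Matrix.unitaryGroup n ℂ := ⟨rotM z c j t, rotM_mem hz h t⟩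

end Unitary

/-! ### Columns of a unitary matrix and their rotation -/

section Columns
variable {d₁ d₂ : ℕ}

/-- The `i`-th column of `U`, reshaped as a `d₁ × d₂` matrix. -/
def colM (d₁ d₂ : ℕ) (U : Matrix (Fin (d₁ * d₂)) (Fin (d₁ * d₂)) ℂ) (i : Fin (d₁ * d₂)) :
    Matrix (Fin d₁) (Fin d₂) ℂ :=
  Matrix.of fun a k => U (finProdFinEquiv (a, k)) i

local notation "𝒰" => Matrix.unitaryGroup (Fin (d₁ * d₂)) ℂ

theorem rho_eq (U : 𝒰) (i : Fin (d₁ * d₂)) : rho U i = colM d₁ d₂ U i * (colM d₁ d₂ U i)ᴴ := by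
  ext a b
  simp [rho, colM, Matrix.mul_apply]

theorem colM_mul_genY_left (U : Matrix (Fin (d₁ * d₂)) (Fin (d₁ * d₂)) ℂ) (z : ℂ)
    {c j : Fin (d₁ * d₂)} (h : c ≠ j) : colM d₁ d₂ (U * genY z c j) c = z • colM d₁ d₂ U j := by
  ext a k
  simp [colM, genY, mul_sub, Matrix.mul_single_apply_same, mul_comm, h]

theorem colM_mul_genY_right (U : Matrix (Fin (d₁ * d₂)) (Fin (d₁ * d₂)) ℂ) (z : ℂ)
    {c j : Fin (d₁ * d₂)} (h : c ≠ j) : colM d₁ d₂ (U * genY z c j) j = -(conj z • colM d₁ d₂ U c) := by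
  ext a k
  simp [colM, genY, mul_sub, Matrix.mul_single_apply_same, mul_comm, h.symm]

theorem colM_mul_genY_other (U : Matrix (Fin (d₁ * d₂)) (Fin (d₁ * d₂)) ℂ) (z : ℂ)
    {c j i : Fin (d₁ * d₂)} (hc : i ≠ c) (hj : i ≠ j) : colM d₁ d₂ (U * genY z c j) i = 0 := by
  ext a k
  simp [colM, genY, mul_sub, hc, hj]

/-- The derivative of `rotM z c j` with respect to the angle. -/
noncomputable def rotM' (z : ℂ) (c j : Fin (d₁ * d₂)) (t : ℝ) :
    Matrix (Fin (d₁ * d₂)) (Fin (d₁ * d₂)) ℂ :=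
  (-(Real.sin t : ℂ)) • genQ c j + (Real.cos t : ℂ) • genY z c j

theorem hasDerivAt_rotM (z : ℂ) (c j : Fin (d₁ * d₂)) (t : ℝ) (p q : Fin (d₁ * d₂)) :
    HasDerivAt (fun s => rotM z c j s p q) (rotM' z c j t p q) t := by
  have hc : HasDerivAt (fun s : ℝ => (Real.cos s : ℂ)) (-(Real.sin t : ℂ)) t := by
    simpa using (Real.hasDerivAt_cos t).ofReal_comp
  have hs : HasDerivAt (fun s : ℝ => (Real.sin s : ℂ)) (Real.cos t : ℂ) t :=
    (Real.hasDerivAt_sin t).ofReal_comp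
  simp only [rotM, rotM', Matrix.add_apply, Matrix.smul_apply, smul_eq_mul]
  exact (((hc.sub_const 1).mul_const _).const_add _).add (hs.mul_const _)

theorem continuous_rotM (z : ℂ) (c j : Fin (d₁ * d₂)) (p q : Fin (d₁ * d₂)) :
    Continuous (fun s => rotM z c j s p q) :=
  continuous_iff_continuousAt.mpr fun t => (hasDerivAt_rotM z c j t p q).continuousAt

theorem continuous_rotM' (z : ℂ) (c j : Fin (d₁ * d₂)) (p q : Fin (d₁ * d₂)) :
    Continuous (fun s => rotM' z c j s p q) := by
  simp only [rotM', Matrix.add_apply, Matrix.smul_apply, smul_eq_mul]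
  fun_prop

theorem continuous_entry (p q : Fin (d₁ * d₂)) :
    Continuous fun U : 𝒰 => (U : Matrix (Fin (d₁ * d₂)) (Fin (d₁ * d₂)) ℂ) p q :=
  continuous_subtype_val.matrix_elem p q

theorem C1.col {z : ℂ} (hz : z * conj z = 1) {c j : Fin (d₁ * d₂)} (h : c ≠ j)
    (i : Fin (d₁ * d₂)) :
    C1 (fun t (U : 𝒰) => colM d₁ d₂ (U * rot hz h t : 𝒰) i) (fun t U => colM d₁ d₂ (U * rotM' z c j t) i) := by
  intro a k
  simp only [colM, Matrix.of_apply, Matrix.mul_apply, Submonoid.coe_mul, rot]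
  refine S1.sum fun p => ⟨?_, ?_, fun t x => (hasDerivAt_rotM z c j t p i).const_mul _⟩
  · exact ((continuous_entry _ _).comp continuous_snd).mul
      ((continuous_rotM z c j p i).comp continuous_fst)
  · exact ((continuous_entry _ _).comp continuous_snd).mul
      ((continuous_rotM' z c j p i).comp continuous_fst)

theorem rotM'_zero (z : ℂ) (c j : Fin (d₁ * d₂)) : rotM' z c j 0 = genY z c j := by
  simp [rotM']

theorem rot_zero {z : ℂ} (hz : z * conj z = 1) {c j : Fin (d₁ * d₂)} (h : c ≠ j) :
    rot hz h 0 = 1 := by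
  apply Subtype.ext
  simp [rot, rotM]

theorem hz_one : (1 : ℂ) * conj (1 : ℂ) = 1 := by simp
theorem hz_I : Complex.I * conj Complex.I = 1 := by simp

/-- Integration by parts on the unitary group. The derivative of `f` along the rotation of columns
`c`, `j` with phase `z` has mean zero; as it has the form `z P + z̄ Q`, the combination below of the
phases `1` and `i` equals `2 P`. -/
theorem stein (μ : Measure 𝒰) [μ.IsHaarMeasure] [IsProbabilityMeasure μ]
    {c j : Fin (d₁ * d₂)} (h : c ≠ j) (f : 𝒰 → ℂ) {f' : ∀ z : ℂ, z * conj z = 1 → ℝ → 𝒰 → ℂ}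
    (hf : ∀ z (hz : z * conj z = 1), S1 (fun t U => f (U * rot hz h t)) (f' z hz)) :
    ∫ U, (f' 1 hz_one 0 U - Complex.I * f' Complex.I hz_I 0 U) ∂μ = 0 := by
  have key : ∀ z (hz : z * conj z = 1), ∫ U, f' z hz 0 U ∂μ = 0 := fun z hz =>
    (hf z hz).integral_zero μ fun t => by
      rw [integral_mul_right_unitary, integral_mul_right_unitary]
  have intg : ∀ z (hz : z * conj z = 1), Integrable (fun U => f' z hz 0 U) μ := fun z hz =>
    ((hf z hz).cont'.comp (Continuous.prodMk_right 0)).integrable_of_hasCompactSupport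
      (HasCompactSupport.of_compactSpace _)
  rw [integral_sub (intg _ _) ((intg _ _).const_mul _), integral_const_mul, key, key]
  simp

/-! ### Summation over all columns -/

/-- `U Uᴴ = 1`, that is, completeness of the columns, in terms of the reshaped columns. -/
theorem sum_entry (U : 𝒰) (a b : Fin d₁) (k l : Fin d₂) :
    ∑ j, colM d₁ d₂ U j a k * star (colM d₁ d₂ U j b l) =
      (1 : Matrix (Fin d₁) (Fin d₁) ℂ) a b * (1 : Matrix (Fin d₂) (Fin d₂) ℂ) k l := by
  have h := congrFun (congrFun (Matrix.mem_unitaryGroup_iff.mp U.2) (finProdFinEquiv (a, k)))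
    (finProdFinEquiv (b, l))
  simp only [Matrix.mul_apply, Matrix.star_apply, Matrix.one_apply,
    EmbeddingLike.apply_eq_iff_eq, Prod.mk.injEq] at h
  simp only [colM, Matrix.of_apply, h, Matrix.one_apply]
  by_cases hab : a = b <;> by_cases hkl : k = l <;> simp [hab, hkl]

theorem sum_tr (U : 𝒰) (A : Matrix (Fin d₁) (Fin d₁) ℂ) (B : Matrix (Fin d₂) (Fin d₂) ℂ) :
    ∑ j, ((colM d₁ d₂ U j)ᴴ * A * colM d₁ d₂ U j * B).trace = A.trace * B.trace := by
  have h1 : ∀ j, ((colM d₁ d₂ U j)ᴴ * A * colM d₁ d₂ U j * B).trace =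
      ∑ k, ∑ l, ∑ a, ∑ b, (colM d₁ d₂ U j a k * star (colM d₁ d₂ U j b l)) * (A b a * B k l) := by
    intro j
    simp only [Matrix.trace, Matrix.diag, Matrix.mul_apply, Matrix.conjTranspose_apply,
      Finset.sum_mul]
    rw [Finset.sum_comm]
    refine Finset.sum_congr rfl fun k _ => Finset.sum_congr rfl fun l _ =>
      Finset.sum_congr rfl fun a _ => Finset.sum_congr rfl fun b _ => ?_
    ring
  simp only [h1]
  rw [Finset.sum_comm]
  simp only [Finset.sum_comm (s := (Finset.univ : Finset (Fin (d₁ * d₂)))), ← Finset.sum_mul,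
    sum_entry]
  simp [Matrix.one_apply, Matrix.trace, Finset.sum_mul_sum]
  rw [Finset.sum_comm]

theorem sum_tr_mul_tr (U : 𝒰) (A : Matrix (Fin d₁) (Fin d₂) ℂ) (B : Matrix (Fin d₂) (Fin d₁) ℂ) :
    ∑ j, ((colM d₁ d₂ U j)ᴴ * A).trace * (B * colM d₁ d₂ U j).trace = (A * B).trace := by
  have h1 : ∀ j, ((colM d₁ d₂ U j)ᴴ * A).trace * (B * colM d₁ d₂ U j).trace =
      ∑ k, ∑ l, ∑ a, ∑ b, (colM d₁ d₂ U j l k * star (colM d₁ d₂ U j b a)) * (A b a * B k l) := by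
    intro j
    simp only [Matrix.trace, Matrix.diag, Matrix.mul_apply, Matrix.conjTranspose_apply,
      Finset.sum_mul, Finset.mul_sum]
    refine Finset.sum_congr rfl fun k _ => Finset.sum_congr rfl fun l _ =>
      Finset.sum_congr rfl fun a _ => Finset.sum_congr rfl fun b _ => ?_
    ring
  simp only [h1]
  rw [Finset.sum_comm]
  simp only [Finset.sum_comm (s := (Finset.univ : Finset (Fin (d₁ * d₂)))), ← Finset.sum_mul,
    sum_entry]
  simp [Matrix.one_apply, Matrix.trace, Matrix.mul_apply]
  rw [Finset.sum_comm]

/-- Orthonormality of the columns. -/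
theorem col_orth (U : 𝒰) (i j : Fin (d₁ * d₂)) :
    ((colM d₁ d₂ U i)ᴴ * colM d₁ d₂ U j).trace = if i = j then 1 else 0 := by
  have h := congrFun (congrFun (Matrix.mem_unitaryGroup_iff'.mp U.2) i) j
  simp only [Matrix.mul_apply, Matrix.star_apply, Matrix.one_apply] at h
  rw [← h, ← finProdFinEquiv.sum_comp, Fintype.sum_prod_type]
  simp only [Matrix.trace, Matrix.diag, Matrix.mul_apply, Matrix.conjTranspose_apply, colM,
    Matrix.of_apply]
  rw [Finset.sum_comm]

/-- `stein` summed over the columns `j ∈ S`: here `D j` is half of the combination of derivatives in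
`stein`, and `E` is a closed form of the sum of the `D j`. -/
theorem stein_sum (μ : Measure 𝒰) [μ.IsHaarMeasure] [IsProbabilityMeasure μ]
    {c : Fin (d₁ * d₂)} (S : Finset (Fin (d₁ * d₂))) (hS : c ∉ S)
    (f : Fin (d₁ * d₂) → 𝒰 → ℂ)
    {f' : ∀ j, c ≠ j → ∀ z : ℂ, z * conj z = 1 → ℝ → 𝒰 → ℂ}
    (hf : ∀ j (h : c ≠ j) z (hz : z * conj z = 1),
      S1 (fun t U => f j (U * rot hz h t)) (f' j h z hz))
    (D : Fin (d₁ * d₂) → 𝒰 → ℂ) (E : 𝒰 → ℂ)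
    (hD : ∀ j, j ∈ S → ∀ (h : c ≠ j) (U : 𝒰),
      f' j h 1 hz_one 0 U - Complex.I * f' j h Complex.I hz_I 0 U = 2 * D j U)
    (hE : ∀ U, ∑ j ∈ S, D j U = E U) :
    ∫ U, E U ∂μ = 0 := by
  have hne : ∀ j ∈ S, c ≠ j := fun j hj hcj => hS (hcj ▸ hj)
  have intg : ∀ j (h : c ≠ j) z (hz : z * conj z = 1), Integrable (fun U => f' j h z hz 0 U) μ :=
    fun j h z hz =>
    ((hf j h z hz).cont'.comp (Continuous.prodMk_right 0)).integrable_of_hasCompactSupport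
      (HasCompactSupport.of_compactSpace _)
  have hD' : ∀ j (hj : j ∈ S), D j = fun U =>
      (1 / 2) * (f' j (hne j hj) 1 hz_one 0 U -
        Complex.I * f' j (hne j hj) Complex.I hz_I 0 U) := fun j hj => by
    funext U
    rw [hD j hj]
    ring
  simp only [← hE]
  rw [integral_finsetSum]
  · refine Finset.sum_eq_zero fun j hj => ?_
    rw [hD' j hj, integral_const_mul, stein μ (hne j hj) (f j) (hf j (hne j hj)), mul_zero]
  · intro j hj
    rw [hD' j hj]
    exact ((intg _ _ _ _).sub ((intg _ _ _ _).const_mul _)).const_mul _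

/-! ### Relations between moments -/

local notation "ψ" => colM d₁ d₂

/-- `Tr ρ²` for the reduced state `ρ = ψ ψᴴ` of column `c`; by cyclicity it is `Tr (ψᴴ ψ)²`. -/
noncomputable def t2 (U : 𝒰) (c : Fin (d₁ * d₂)) : ℂ :=
  ((ψ U c)ᴴ * ψ U c * (ψ U c)ᴴ * ψ U c).trace

/-- `Tr ρ³` for the reduced state `ρ = ψ ψᴴ` of column `c`; by cyclicity it is `Tr (ψᴴ ψ)³`. -/
noncomputable def t3 (U : 𝒰) (c : Fin (d₁ * d₂)) : ℂ :=
  ((ψ U c)ᴴ * ψ U c * (ψ U c)ᴴ * ψ U c * (ψ U c)ᴴ * ψ U c).trace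

/-- The overlap `Tr (ρᵢ ρ_c)` of the reduced states of two columns. -/
noncomputable def ovl (U : 𝒰) (i c : Fin (d₁ * d₂)) : ℂ :=
  ((ψ U c)ᴴ * ψ U i * (ψ U i)ᴴ * ψ U c).trace

/-- With `A = ψᵢ ψᵢᴴ`, the sesquilinear expression
`(d₂ - Tr A²) Tr (ψ_cᴴ A ψ_c) + Tr (ψ_cᴴ A² ψ_c) - |Tr (ψ_cᴴ A ψᵢ)|²` in `ψ_c`. It arises when the
square of the overlap is integrated by parts in column `c`, and lowers its degree in `ψ_c` from
four to two. -/
noncomputable def quad (U : 𝒰) (i c : Fin (d₁ * d₂)) : ℂ :=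
  (d₂ - t2 U i) * ovl U i c + ((ψ U c)ᴴ * (ψ U i * (ψ U i)ᴴ * (ψ U i * (ψ U i)ᴴ)) *
    ψ U c).trace - ((ψ U c)ᴴ * (ψ U i * (ψ U i)ᴴ) * ψ U i).trace *
    ((ψ U i)ᴴ * (ψ U i * (ψ U i)ᴴ) * ψ U c).trace

theorem sum_tr_left (U : 𝒰) (A : Matrix (Fin d₁) (Fin d₁) ℂ) :
    ∑ j, ((ψ U j)ᴴ * A * ψ U j).trace = d₂ * A.trace := by
  simpa [mul_comm] using sum_tr U A 1

theorem sum_tr_right (U : 𝒰) (B : Matrix (Fin d₂) (Fin d₂) ℂ) :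
    ∑ j, ((ψ U j)ᴴ * ψ U j * B).trace = d₁ * B.trace := by
  simpa using sum_tr U 1 B

/-- `(N + 1) E t₂ = d₁ + d₂`, from integrating `Tr (ψ_jᴴ ψ_c ψ_cᴴ ψ_c)` by parts. -/
theorem int_e2 (μ : Measure 𝒰) [μ.IsHaarMeasure] [IsProbabilityMeasure μ] (c : Fin (d₁ * d₂)) :
    ∫ U, ((d₁ : ℂ) + d₂ - (d₁ * d₂ + 1) * t2 U c) ∂μ = 0 := by
  refine stein_sum μ (c := c) (Finset.univ.erase c) (by simp)
    (fun j U => ((ψ U j)ᴴ * ψ U c * (ψ U c)ᴴ * ψ U c).trace)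
    (fun j h z hz => ((((C1.col hz h j).ct.mul (C1.col hz h c)).mul (C1.col hz h c).ct).mul
      (C1.col hz h c)).tr)
    (fun j U => ((ψ U j)ᴴ * ψ U j * ((ψ U c)ᴴ * ψ U c)).trace +
      ((ψ U j)ᴴ * (ψ U c * (ψ U c)ᴴ) * ψ U j).trace - t2 U c) _ ?_ ?_
  · -- The product rule: `ψ_c` contributes `z ψ_j` and `ψ_jᴴ` contributes `-z ψ_cᴴ`, while the terms
    -- in `z̄` cancel between the phases `z = 1` and `z = i`.
    intro j _ h U
    simp only [rotM'_zero, rot_zero, mul_one, colM_mul_genY_left _ _ h, colM_mul_genY_right _ _ h,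
      t2, Matrix.conjTranspose_smul, Matrix.conjTranspose_neg, Matrix.smul_mul,
      Matrix.mul_smul, Matrix.neg_mul, Matrix.add_mul,
      Matrix.trace_add, Matrix.trace_neg, Matrix.trace_smul, smul_eq_mul, Matrix.mul_assoc,
      Complex.star_def, map_one, map_neg, Complex.conj_I]
    ring_nf
    simp only [Complex.I_sq]
    ring
  · -- The sum over `j ≠ c` is the sum over all columns minus the term `j = c`.
    intro U
    rw [Finset.sum_erase_eq_sub (Finset.mem_univ _), Finset.sum_sub_distrib,
      Finset.sum_add_distrib, sum_tr_right, sum_tr_left]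
    rw [Matrix.trace_mul_comm (ψ U c) (ψ U c)ᴴ]
    simp [col_orth, t2, Matrix.mul_assoc]
    ring

/-- `(N + 2) E t₃ = (d₁ + d₂) E t₂ + 1`, from integrating `Tr (ψ_jᴴ ψ_c (ψ_cᴴ ψ_c)²)` by parts. -/
theorem int_e3 (μ : Measure 𝒰) [μ.IsHaarMeasure] [IsProbabilityMeasure μ] (c : Fin (d₁ * d₂)) :
    ∫ U, (((d₁ : ℂ) + d₂) * t2 U c + 1 - (d₁ * d₂ + 2) * t3 U c) ∂μ = 0 := by
  refine stein_sum μ (c := c) (Finset.univ.erase c) (by simp)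
    (fun j U => ((ψ U j)ᴴ * ψ U c * (ψ U c)ᴴ * ψ U c * (ψ U c)ᴴ * ψ U c).trace)
    (fun j h z hz => ((((((C1.col hz h j).ct.mul (C1.col hz h c)).mul (C1.col hz h c).ct).mul
      (C1.col hz h c)).mul (C1.col hz h c).ct).mul (C1.col hz h c)).tr)
    (fun j U => ((ψ U j)ᴴ * ψ U j * ((ψ U c)ᴴ * ψ U c * (ψ U c)ᴴ * ψ U c)).trace +
      ((ψ U j)ᴴ * (ψ U c * (ψ U c)ᴴ) * ψ U j * ((ψ U c)ᴴ * ψ U c)).trace +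
      ((ψ U j)ᴴ * (ψ U c * (ψ U c)ᴴ * ψ U c * (ψ U c)ᴴ) * ψ U j).trace - t3 U c) _ ?_ ?_
  · intro j _ h U
    simp only [rotM'_zero, rot_zero, mul_one, colM_mul_genY_left _ _ h, colM_mul_genY_right _ _ h,
      t3, Matrix.conjTranspose_smul, Matrix.conjTranspose_neg, Matrix.smul_mul,
      Matrix.mul_smul, Matrix.neg_mul, Matrix.add_mul,
      Matrix.trace_add, Matrix.trace_neg, Matrix.trace_smul, smul_eq_mul, Matrix.mul_assoc,
      Complex.star_def, map_one, map_neg, Complex.conj_I]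
    ring_nf
    simp only [Complex.I_sq]
    ring
  · intro U
    rw [Finset.sum_erase_eq_sub (Finset.mem_univ _), Finset.sum_sub_distrib,
      Finset.sum_add_distrib, Finset.sum_add_distrib, sum_tr_right, sum_tr_left, sum_tr,
      Matrix.trace_mul_comm (ψ U c) (ψ U c)ᴴ,
      Matrix.trace_mul_comm (ψ U c * (ψ U c)ᴴ * ψ U c) (ψ U c)ᴴ]
    simp [col_orth, t2, t3, Matrix.mul_assoc]
    ring

/-- `(N + 3) E t₂² = (d₁ + d₂) E t₂ + 2 E t₃`, from integrating `Tr (ψ_jᴴ ψ_c ψ_cᴴ ψ_c) t₂` by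
parts. -/
theorem int_e22 (μ : Measure 𝒰) [μ.IsHaarMeasure] [IsProbabilityMeasure μ] (c : Fin (d₁ * d₂)) :
    ∫ U, (((d₁ : ℂ) + d₂) * t2 U c + 2 * t3 U c - (d₁ * d₂ + 3) * t2 U c ^ 2) ∂μ = 0 := by
  refine stein_sum μ (c := c) (Finset.univ.erase c) (by simp)
    (fun j U => ((ψ U j)ᴴ * ψ U c * (ψ U c)ᴴ * ψ U c).trace *
      ((ψ U c)ᴴ * ψ U c * (ψ U c)ᴴ * ψ U c).trace)
    (fun j h z hz => ((((C1.col hz h j).ct.mul (C1.col hz h c)).mul (C1.col hz h c).ct).mul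
      (C1.col hz h c)).tr.mul ((((C1.col hz h c).ct.mul (C1.col hz h c)).mul
      (C1.col hz h c).ct).mul (C1.col hz h c)).tr)
    (fun j U => ((ψ U j)ᴴ * ψ U j * ((ψ U c)ᴴ * ψ U c)).trace * t2 U c +
      ((ψ U j)ᴴ * (ψ U c * (ψ U c)ᴴ) * ψ U j).trace * t2 U c +
      2 * (((ψ U j)ᴴ * (ψ U c * (ψ U c)ᴴ * ψ U c)).trace *
        ((ψ U c)ᴴ * ψ U c * (ψ U c)ᴴ * ψ U j).trace) - t2 U c ^ 2) _ ?_ ?_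
  · intro j _ h U
    have hcyc : ((ψ U c)ᴴ * (ψ U j * ((ψ U c)ᴴ * ψ U c))).trace =
        ((ψ U c)ᴴ * (ψ U c * ((ψ U c)ᴴ * ψ U j))).trace := by
      rw [← Matrix.mul_assoc, Matrix.trace_mul_comm]
      simp only [Matrix.mul_assoc]
    simp only [rotM'_zero, rot_zero, mul_one, colM_mul_genY_left _ _ h, colM_mul_genY_right _ _ h,
      t2, Matrix.conjTranspose_smul, Matrix.conjTranspose_neg, Matrix.smul_mul,
      Matrix.mul_smul, Matrix.neg_mul, Matrix.add_mul,
      Matrix.trace_add, Matrix.trace_neg, Matrix.trace_smul, smul_eq_mul, Matrix.mul_assoc,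
      Complex.star_def, map_one, map_neg, Complex.conj_I]
    rw [hcyc]
    ring_nf
    simp only [Complex.I_sq]
    ring
  · intro U
    rw [Finset.sum_erase_eq_sub (Finset.mem_univ _), Finset.sum_sub_distrib,
      Finset.sum_add_distrib, Finset.sum_add_distrib, ← Finset.sum_mul, ← Finset.sum_mul,
      ← Finset.mul_sum, sum_tr_right, sum_tr_left, sum_tr_mul_tr,
      Matrix.trace_mul_comm (ψ U c) (ψ U c)ᴴ,
      Matrix.trace_mul_comm (ψ U c * (ψ U c)ᴴ * ψ U c) _]
    simp [col_orth, t2, t3, Matrix.mul_assoc]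
    ring

/-- `N E X² = E q`, where `X` is the overlap of columns `i`, `c` and `q` is `quad`, from integrating
`Tr (ψ_jᴴ A ψ_c) X` by parts, with `A = ψᵢ ψᵢᴴ`. The column `j = i` is left out of the sum, so that
the rotations fix `A`. -/
theorem int_ovl_sq (μ : Measure 𝒰) [μ.IsHaarMeasure] [IsProbabilityMeasure μ]
    {i c : Fin (d₁ * d₂)} (hi : i ≠ c) :
    ∫ U, (quad U i c - d₁ * d₂ * ovl U i c ^ 2) ∂μ = 0 := by
  refine stein_sum μ (c := c) ((Finset.univ.erase c).erase i) (by simp)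
    (fun j U => ((ψ U j)ᴴ * (ψ U i * (ψ U i)ᴴ) * ψ U c).trace *
      ((ψ U c)ᴴ * (ψ U i * (ψ U i)ᴴ) * ψ U c).trace)
    (fun j h z hz => (((C1.col hz h j).ct.mul ((C1.col hz h i).mul (C1.col hz h i).ct)).mul
      (C1.col hz h c)).tr.mul (((C1.col hz h c).ct.mul ((C1.col hz h i).mul
      (C1.col hz h i).ct)).mul (C1.col hz h c)).tr)
    (fun j U => ((ψ U j)ᴴ * (ψ U i * (ψ U i)ᴴ) * ψ U j).trace * ovl U i c +
      ((ψ U j)ᴴ * ((ψ U i * (ψ U i)ᴴ) * ψ U c)).trace *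
        (((ψ U c)ᴴ * (ψ U i * (ψ U i)ᴴ)) * ψ U j).trace - ovl U i c ^ 2)
    (fun U => quad U i c - d₁ * d₂ * ovl U i c ^ 2) ?_ ?_
  · intro j hj h U
    have h0 : i ≠ j := (Finset.ne_of_mem_erase hj).symm
    simp only [rotM'_zero, rot_zero, mul_one, colM_mul_genY_left _ _ h, colM_mul_genY_right _ _ h,
      ovl, Matrix.conjTranspose_smul, Matrix.conjTranspose_neg, Matrix.smul_mul,
      Matrix.mul_smul, Matrix.neg_mul,
      Matrix.trace_add, Matrix.trace_neg, Matrix.trace_smul, smul_eq_mul, Matrix.mul_assoc,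
      Complex.star_def, map_one, map_neg, Complex.conj_I,
      colM_mul_genY_other _ _ hi h0, Matrix.conjTranspose_zero, Matrix.mul_zero, Matrix.zero_mul,
      add_zero]
    ring_nf
    simp only [Complex.I_sq]
    ring
  · intro U
    rw [Finset.sum_erase_eq_sub (by simp [hi]), Finset.sum_erase_eq_sub (Finset.mem_univ _),
      Finset.sum_sub_distrib, Finset.sum_add_distrib, ← Finset.sum_mul, sum_tr_left,
      sum_tr_mul_tr, Matrix.trace_mul_comm (ψ U i) (ψ U i)ᴴ, Matrix.mul_assoc (ψ U i * (ψ U i)ᴴ),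
      Matrix.trace_mul_comm (ψ U i * (ψ U i)ᴴ)]
    have hcyc : (ψ U c * ((ψ U c)ᴴ * (ψ U i * (ψ U i)ᴴ)) * (ψ U i * (ψ U i)ᴴ)).trace =
        ((ψ U c)ᴴ * (ψ U i * (ψ U i)ᴴ * (ψ U i * (ψ U i)ᴴ)) * ψ U c).trace := by
      rw [Matrix.mul_assoc, Matrix.trace_mul_comm]
      simp only [Matrix.mul_assoc]
    rw [hcyc]
    simp [col_orth, t2, ovl, quad, Matrix.mul_assoc]
    ring

/-- `(N - 1) E q = d₂² - d₂ E t₂ - 2 E t₃ + 2 E t₂²`, where `q` is `quad`, from integrating by parts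
the expression `q` with `ψ_cᴴ` replaced by `ψ_jᴴ`. -/
theorem int_quad (μ : Measure 𝒰) [μ.IsHaarMeasure] [IsProbabilityMeasure μ]
    {i c : Fin (d₁ * d₂)} (hi : i ≠ c) :
    ∫ U, ((d₂ : ℂ) ^ 2 - d₂ * t2 U i - 2 * t3 U i + 2 * t2 U i ^ 2 -
      (d₁ * d₂ - 1) * quad U i c) ∂μ = 0 := by
  refine stein_sum μ (c := c) ((Finset.univ.erase c).erase i) (by simp)
    (fun j U => ((d₂ : ℂ) - ((ψ U i)ᴴ * ψ U i * (ψ U i)ᴴ * ψ U i).trace) *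
      ((ψ U j)ᴴ * (ψ U i * (ψ U i)ᴴ) * ψ U c).trace +
      ((ψ U j)ᴴ * (ψ U i * (ψ U i)ᴴ * (ψ U i * (ψ U i)ᴴ)) * ψ U c).trace -
      ((ψ U j)ᴴ * (ψ U i * (ψ U i)ᴴ) * ψ U i).trace *
        ((ψ U i)ᴴ * (ψ U i * (ψ U i)ᴴ) * ψ U c).trace)
    (fun j h z hz =>
      have V := C1.col hz h c
      have W := (C1.col hz h j).ct
      have P := C1.col hz h i
      have A := P.mul P.ct
      ((((S1.const _).sub (((P.ct.mul P).mul P.ct).mul P).tr).mul ((W.mul A).mul V).tr).add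
        ((W.mul (A.mul A)).mul V).tr).sub
        (((W.mul A).mul P).tr.mul ((P.ct.mul A).mul V).tr))
    (fun j U => ((d₂ : ℂ) - t2 U i) * ((ψ U j)ᴴ * (ψ U i * (ψ U i)ᴴ) * ψ U j).trace +
      ((ψ U j)ᴴ * (ψ U i * (ψ U i)ᴴ * (ψ U i * (ψ U i)ᴴ)) * ψ U j).trace -
      ((ψ U j)ᴴ * (ψ U i * (ψ U i)ᴴ * ψ U i)).trace *
        ((ψ U i)ᴴ * (ψ U i * (ψ U i)ᴴ) * ψ U j).trace -
      quad U i c) _ ?_ ?_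
  · intro j hj h U
    have h0 : i ≠ j := (Finset.ne_of_mem_erase hj).symm
    simp only [rotM'_zero, rot_zero, mul_one, colM_mul_genY_left _ _ h, colM_mul_genY_right _ _ h,
      t2, ovl, quad, Matrix.conjTranspose_smul, Matrix.conjTranspose_neg, Matrix.smul_mul,
      Matrix.mul_smul, Matrix.neg_mul,
      Matrix.trace_add, Matrix.trace_neg, Matrix.trace_smul, smul_eq_mul, Matrix.mul_assoc,
      Complex.star_def, map_one, map_neg, Complex.conj_I,
      colM_mul_genY_other _ _ hi h0, Matrix.conjTranspose_zero, Matrix.mul_zero, Matrix.zero_mul,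
      Matrix.trace_zero, add_zero,
      zero_add, mul_zero, zero_mul]
    ring_nf
    simp only [Complex.I_sq]
    ring
  · intro U
    have hcyc : (ψ U i * (ψ U i)ᴴ * (ψ U i * (ψ U i)ᴴ)).trace = t2 U i := by
      rw [Matrix.mul_assoc, Matrix.trace_mul_comm]
      simp only [t2, Matrix.mul_assoc]
    have hcyc' : (ψ U i * (ψ U i)ᴴ * ψ U i * ((ψ U i)ᴴ * (ψ U i * (ψ U i)ᴴ))).trace = t3 U i := by
      rw [Matrix.mul_assoc, Matrix.mul_assoc, Matrix.trace_mul_comm]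
      simp only [t3, Matrix.mul_assoc]
    rw [Finset.sum_erase_eq_sub (by simp [hi]), Finset.sum_erase_eq_sub (Finset.mem_univ _),
      Finset.sum_sub_distrib, Finset.sum_sub_distrib, Finset.sum_add_distrib, ← Finset.mul_sum,
      sum_tr_left, sum_tr_left, sum_tr_mul_tr, hcyc, hcyc',
      Matrix.trace_mul_comm (ψ U i) (ψ U i)ᴴ]
    simp [col_orth, t2, t3, ovl, quad, Matrix.mul_assoc]
    ring

/-! ### Solving the relations -/

theorem continuous_colM (i : Fin (d₁ * d₂)) : Continuous fun U : 𝒰 => ψ U i :=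
  continuous_matrix fun _ _ => continuous_entry _ _

theorem continuous_t2 (i : Fin (d₁ * d₂)) : Continuous fun U : 𝒰 => t2 U i := by
  have h := continuous_colM i
  exact (((h.matrix_conjTranspose.matrix_mul h).matrix_mul h.matrix_conjTranspose).matrix_mul
    h).matrix_trace

theorem continuous_t3 (i : Fin (d₁ * d₂)) : Continuous fun U : 𝒰 => t3 U i := by
  have h := continuous_colM i
  exact (((((h.matrix_conjTranspose.matrix_mul h).matrix_mul h.matrix_conjTranspose).matrix_mul
    h).matrix_mul h.matrix_conjTranspose).matrix_mul h).matrix_trace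

theorem continuous_ovl (i c : Fin (d₁ * d₂)) : Continuous fun U : 𝒰 => ovl U i c := by
  have h := continuous_colM i
  have h' := continuous_colM c
  exact (((h'.matrix_conjTranspose.matrix_mul h).matrix_mul h.matrix_conjTranspose).matrix_mul
    h').matrix_trace

theorem continuous_quad (i c : Fin (d₁ * d₂)) : Continuous fun U : 𝒰 => quad U i c := by
  have h := continuous_colM i
  have h' := continuous_colM c
  have hA := h.matrix_mul h.matrix_conjTranspose
  exact (((continuous_const.sub (continuous_t2 i)).mul (continuous_ovl i c)).add
    ((h'.matrix_conjTranspose.matrix_mul (hA.matrix_mul hA)).matrix_mul h').matrix_trace).sub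
    (((h'.matrix_conjTranspose.matrix_mul hA).matrix_mul h).matrix_trace.mul
      ((h.matrix_conjTranspose.matrix_mul hA).matrix_mul h').matrix_trace)

/-- The second moment of the overlap of two distinct columns. -/
theorem integral_ovl_sq (μ : Measure 𝒰) [μ.IsHaarMeasure] [IsProbabilityMeasure μ]
    (hd : 2 ≤ d₁ * d₂) {i c : Fin (d₁ * d₂)} (hi : i ≠ c) :
    ∫ U, ovl U i c ^ 2 ∂μ =
      (((d₂ : ℂ) ^ 2 - 1) * ((d₁ : ℂ) * (6 * (d₂ : ℂ) + (d₁ : ℂ) * ((d₂ : ℂ) ^ 2 * ((d₁ : ℂ) * (d₂ : ℂ) + 5) - 2)) + 2)) / ((d₁ : ℂ) * (d₂ : ℂ) * ((d₁ : ℂ) * (d₂ : ℂ) - 1) * ((d₁ : ℂ) * (d₂ : ℂ) + 1) * ((d₁ : ℂ) * (d₂ : ℂ) + 2) * ((d₁ : ℂ) * (d₂ : ℂ) + 3)) := by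
  have intg : ∀ f : 𝒰 → ℂ, Continuous f → Integrable f μ := fun f hf =>
    hf.integrable_of_hasCompactSupport (HasCompactSupport.of_compactSpace f)
  have i2 := intg _ (continuous_t2 i)
  have i3 := intg _ (continuous_t3 i)
  have i22 : Integrable (fun U : 𝒰 => t2 U i ^ 2) μ := intg _ ((continuous_t2 i).pow 2)
  have iq := intg _ (continuous_quad i c)
  have io : Integrable (fun U : 𝒰 => ovl U i c ^ 2) μ := intg _ ((continuous_ovl i c).pow 2)
  have ic : ∀ k : ℂ, Integrable (fun _ : 𝒰 => k) μ := fun k => integrable_const k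
  have j2 : ∀ k : ℂ, Integrable (fun U : 𝒰 => k * t2 U i) μ := fun k => i2.const_mul k
  have j3 : ∀ k : ℂ, Integrable (fun U : 𝒰 => k * t3 U i) μ := fun k => i3.const_mul k
  have j22 : ∀ k : ℂ, Integrable (fun U : 𝒰 => k * t2 U i ^ 2) μ := fun k => i22.const_mul k
  have jA : Integrable (fun U : 𝒰 => ((d₁ : ℂ) + d₂) * t2 U i + 1) μ := (j2 _).add (ic _)
  have jB : Integrable (fun U : 𝒰 => ((d₁ : ℂ) + d₂) * t2 U i + 2 * t3 U i) μ :=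
    (j2 _).add (j3 _)
  have jC : Integrable (fun U : 𝒰 => (d₂ : ℂ) ^ 2 - d₂ * t2 U i) μ := (ic _).sub (j2 _)
  have jD : Integrable (fun U : 𝒰 => (d₂ : ℂ) ^ 2 - d₂ * t2 U i - 2 * t3 U i) μ :=
    jC.sub (j3 _)
  have jE : Integrable
      (fun U : 𝒰 => (d₂ : ℂ) ^ 2 - d₂ * t2 U i - 2 * t3 U i + 2 * t2 U i ^ 2) μ :=
    jD.add (j22 _)
  have e2 := int_e2 μ i
  have e3 := int_e3 μ i
  have e22 := int_e22 μ i
  have eo := int_ovl_sq μ hi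
  have eqd := int_quad μ hi
  rw [integral_sub (ic _) (j2 _), integral_const_mul] at e2
  rw [integral_sub jA (j3 _), integral_add (j2 _) (ic _), integral_const_mul,
    integral_const_mul] at e3
  rw [integral_sub jB (j22 _), integral_add (j2 _) (j3 _), integral_const_mul,
    integral_const_mul, integral_const_mul] at e22
  rw [integral_sub iq (io.const_mul _), integral_const_mul] at eo
  rw [integral_sub jE (iq.const_mul _), integral_add jD (j22 _), integral_sub jC (j3 _),
    integral_sub (ic _) (j2 _), integral_const_mul, integral_const_mul, integral_const_mul,
    integral_const_mul] at eqd
  simp only [integral_const, probReal_univ, one_smul] at e2 e3 eqd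
  generalize ∫ U, t2 U i ∂μ = x2 at *
  generalize ∫ U, t3 U i ∂μ = x3 at *
  generalize ∫ U, t2 U i ^ 2 ∂μ = x22 at *
  generalize ∫ U, quad U i c ∂μ = xq at *
  generalize ∫ U, ovl U i c ^ 2 ∂μ = xo at *
  have hN : ((d₁ : ℂ) * d₂) = ((d₁ * d₂ : ℕ) : ℂ) := by push_cast; rfl
  have n0 : (d₁ : ℂ) * d₂ ≠ 0 := by rw [hN]; exact_mod_cast (by omega : d₁ * d₂ ≠ 0)
  have n1 : (d₁ : ℂ) * d₂ - 1 ≠ 0 := by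
    rw [hN, sub_ne_zero]; exact_mod_cast (by omega : d₁ * d₂ ≠ 1)
  have n2 : (d₁ : ℂ) * d₂ + 1 ≠ 0 := by rw [hN]; exact_mod_cast (by omega : d₁ * d₂ + 1 ≠ 0)
  have n3 : (d₁ : ℂ) * d₂ + 2 ≠ 0 := by rw [hN]; exact_mod_cast (by omega : d₁ * d₂ + 2 ≠ 0)
  have n4 : (d₁ : ℂ) * d₂ + 3 ≠ 0 := by rw [hN]; exact_mod_cast (by omega : d₁ * d₂ + 3 ≠ 0)
  rw [eq_div_iff (by simp only [mul_ne_zero_iff] at *; tauto)]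
  generalize (d₁ : ℂ) = a at *
  generalize (d₂ : ℂ) = b at *
  -- The relations are triangular: each multiplier is the one that eliminates, in the order `xo`,
  -- `xq`, `x22`, `x3`, `x2`, the unknown that its relation determines.
  linear_combination (-(a * b - 1) * (a * b + 1) * (a * b + 2) * (a * b + 3)) * eo -
    ((a * b + 1) * (a * b + 2) * (a * b + 3)) * eqd -
    (2 * (a * b + 1) * (a * b + 2)) * e22 + (2 * (a * b + 1) ^ 2) * e3 +
    (b * (a * b + 2) * (a * b + 3) - 2 * (a + b)) * e2

end Columns

/-- `E[(Tr(ρ₀ρ₁))²]` for a Haar-random unitary of size `d₁d₂ ≥ 2`. -/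
theorem stmt6 (d₁ d₂ : ℕ) (hd₁ : 0 < d₁) (hd₂ : 0 < d₂) (hd : 2 ≤ d₁ * d₂)
    (μ : Measure (Matrix.unitaryGroup (Fin (d₁ * d₂)) ℂ))
    [μ.IsHaarMeasure] [IsProbabilityMeasure μ] :
    let i0 : Fin (d₁ * d₂) := ⟨0, by omega⟩
    let i1 : Fin (d₁ * d₂) := ⟨1, by omega⟩
    ∫ U, Matrix.trace (rho U i0 * rho U i1) ^ 2 ∂μ =
      (((d₂ : ℂ) ^ 2 - 1) * ((d₁ : ℂ) * (6 * (d₂ : ℂ) + (d₁ : ℂ) * ((d₂ : ℂ) ^ 2 * ((d₁ : ℂ) * (d₂ : ℂ) + 5) - 2)) + 2)) / ((d₁ : ℂ) * (d₂ : ℂ) * ((d₁ : ℂ) * (d₂ : ℂ) - 1) * ((d₁ : ℂ) * (d₂ : ℂ) + 1) * ((d₁ : ℂ) * (d₂ : ℂ) + 2) * ((d₁ : ℂ) * (d₂ : ℂ) + 3)) := by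
  intro i0 i1
  have h01 : i0 ≠ i1 := by simp [i0, i1]
  rw [← integral_ovl_sq μ hd h01]
  congr 1
  funext U
  rw [rho_eq, rho_eq, ← Matrix.mul_assoc, Matrix.trace_mul_comm]
  simp only [ovl, Matrix.mul_assoc]
end

section
/- Let d₁, d₂ be positive integers with d₁d₂ ≥ 3, N = d₁d₂, and let U be Haar-distributed on U(N). With ρ₀, ρ₁, ρ₂ the partial traces over the second factor of the projectors onto the 0-th, 1-st and 2-nd columns of U, one has E[Tr(ρ₀ρ₁) · Tr(ρ₀ρ₂)] = (d₂²−1)·(d₁(d₁(d₂(d₁(3d₂² + d₁(d₂²−1)d₂ − 4) − 3d₂) + 2) − 8d₂) − 2) / (d₁d₂(d₁d₂−2)(d₁d₂−1)(d₁d₂+1)(d₁d₂+2)(d₁d₂+3)). -/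
/-! Write `N = d₁d₂`, let `u_i` be the columns of `U`, and put `A = ρ₀ ⊗ 1`, a matrix depending on
`u₀` only.  Then `Tr(ρ₀ρ_i) = ⟨u_i, A u_i⟩`, so the expectation is `E[q₁₁ q₂₂]` with
`q_ij = ⟨u_i, A u_j⟩`.  No general integration formula on `U(N)` is needed: everything follows from
the fact that the integral of a derivative along a one-parameter group of translations vanishes.
Combining two skew-Hermitian directions gives the same for the complex directions `E_{ab}`
(`LD.integral_eq_zero` on the left, `RD.integral_eq_zero` on the right).

Right translations by `E_{ba}` with `a, b ≠ 0` rotate the columns orthogonal to `u₀` among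
themselves.  They express `E[q₁₁ q₂₂]` and `E[q₁₂ q₂₁]` through two linear relations
(`two_column_direct`, `two_column_exchange`), whose right-hand sides are averages of a single column
and hence, since `u_i` is uniform on the unit sphere of `u₀ᗮ` given `u₀` (`column_average`),
invariants of `u₀`.  For the present `A` these are `Tr ρ₀²`, `(Tr ρ₀²)²` and `Tr ρ₀³`
(`overlap_average`).

Left translations give a Wick type recursion for the entries `ψ_a` of `u₀`: if `F` is a polynomial
of degree `m` in `ψ`, then `(N + m) E[ψ_b F] = E[∂F/∂(conj ψ_b)]` (`Wirt.integral`).  It determines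
the three moments one after another:

* `(N + 1) E[Tr ρ²] = d₁ + d₂`,
* `(N + 2) E[Tr ρ³] = (d₁ + d₂) E[Tr ρ²] + 1`,
* `(N + 3) E[(Tr ρ²)²] = (d₁ + d₂) E[Tr ρ²] + 2 E[Tr ρ³]`.

The stated rational function results by substitution. -/

open Matrix MeasureTheory

/-! ### Derivatives along measure-preserving flows -/

/-- `F'` is the derivative of `F` along the flow `Φ`; both are required to be continuous. -/
structure FlowDeriv {G : Type*} [TopologicalSpace G] (Φ : ℝ → G → G) (F F' : G → ℂ) : Prop where
  cont : Continuous F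
  cont' : Continuous F'
  deriv : ∀ U t, HasDerivAt (fun s => F (Φ s U)) (F' (Φ t U)) t

/-- A family of continuous maps starting at the identity and preserving `μ`-integrals. -/
structure InvFlow {G : Type*} [TopologicalSpace G] [MeasurableSpace G] (μ : Measure G)
    (Φ : ℝ → G → G) : Prop where
  zero : ∀ U, Φ 0 U = U
  cont : ∀ t, Continuous (Φ t)
  inv : ∀ t (F : G → ℂ), ∫ U, F (Φ t U) ∂μ = ∫ U, F U ∂μ

lemma continuous_integrable {G : Type*} [TopologicalSpace G] [CompactSpace G] [MeasurableSpace G]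
    [BorelSpace G] (μ : Measure G) [IsProbabilityMeasure μ] {F : G → ℂ} (hF : Continuous F) :
    Integrable F μ :=
  hF.integrable_of_hasCompactSupport (HasCompactSupport.of_compactSpace F)

/-- Differentiating `∫ F ∘ Φ t = ∫ F` at `t = 0`. -/
lemma FlowDeriv.integral_eq_zero {G : Type*} [TopologicalSpace G] [CompactSpace G]
    [MeasurableSpace G] [BorelSpace G] {μ : Measure G} [IsProbabilityMeasure μ]
    {Φ : ℝ → G → G} (hΦ : InvFlow μ Φ) {F F' : G → ℂ} (h : FlowDeriv Φ F F') :
    ∫ U, F' U ∂μ = 0 := by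
  obtain ⟨C, hC⟩ : ∃ C, ∀ U, ‖F' U‖ ≤ C := by
    obtain ⟨C, hC⟩ := (isCompact_univ (X := G)).exists_bound_of_continuousOn h.cont'.continuousOn
    exact ⟨C, fun U => hC U (Set.mem_univ U)⟩
  have key := (hasDerivAt_integral_of_dominated_loc_of_deriv_le (μ := μ) (x₀ := (0 : ℝ))
    (s := Set.univ) (F := fun t U => F (Φ t U)) (F' := fun t U => F' (Φ t U))
    (bound := fun _ => C) Filter.univ_mem
    (Filter.Eventually.of_forall fun t =>
      (continuous_integrable μ (h.cont.comp (hΦ.cont t))).aestronglyMeasurable)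
    (continuous_integrable μ (h.cont.comp (hΦ.cont 0)))
    (continuous_integrable μ (h.cont'.comp (hΦ.cont 0))).aestronglyMeasurable
    (Filter.Eventually.of_forall fun U t _ => hC _) (integrable_const C)
    (Filter.Eventually.of_forall fun U t _ => h.deriv U t)).2
  simp only [hΦ.inv, hΦ.zero] at key
  exact key.unique (hasDerivAt_const _ _)

/-- The complexified derivative `F' = ∂_Φ F + i ∂_Ψ F` along a pair of flows.  With `Φ`, `Ψ` the
translations by the two skew-Hermitian parts of a complex matrix `X`, it plays the role of the
derivative along `X`, which need not itself be skew-Hermitian. -/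
def CDeriv {G : Type*} [TopologicalSpace G] (Φ Ψ : ℝ → G → G) (F F' : G → ℂ) : Prop :=
  ∃ F₁ F₂, FlowDeriv Φ F F₁ ∧ FlowDeriv Ψ F F₂ ∧ F' = fun U => F₁ U + Complex.I * F₂ U

section CDerivRules

variable {G : Type*} [TopologicalSpace G] {Φ Ψ : ℝ → G → G} {F F' H H' : G → ℂ}

lemma CDeriv.continuous (h : CDeriv Φ Ψ F F') : Continuous F := by
  obtain ⟨_, _, h, -, -⟩ := h
  exact h.cont

lemma CDeriv.continuous' (h : CDeriv Φ Ψ F F') : Continuous F' := by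
  obtain ⟨F₁, F₂, h₁, h₂, rfl⟩ := h
  exact h₁.cont'.add (continuous_const.mul h₂.cont')

lemma CDeriv.congr (h : CDeriv Φ Ψ F F') (hF : ∀ U, F U = H U) (hF' : ∀ U, F' U = H' U) :
    CDeriv Φ Ψ H H' := by
  obtain rfl : F = H := funext hF
  obtain rfl : F' = H' := funext hF'
  exact h

lemma CDeriv.const (c : ℂ) : CDeriv Φ Ψ (fun _ => c) (fun _ => 0) :=
  ⟨fun _ => 0, fun _ => 0, ⟨continuous_const, continuous_const, fun _ _ => hasDerivAt_const _ _⟩,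
    ⟨continuous_const, continuous_const, fun _ _ => hasDerivAt_const _ _⟩, by simp⟩

lemma CDeriv.add (h : CDeriv Φ Ψ F F') (k : CDeriv Φ Ψ H H') :
    CDeriv Φ Ψ (fun U => F U + H U) (fun U => F' U + H' U) := by
  obtain ⟨F₁, F₂, h₁, h₂, rfl⟩ := h
  obtain ⟨H₁, H₂, k₁, k₂, rfl⟩ := k
  refine ⟨fun U => F₁ U + H₁ U, fun U => F₂ U + H₂ U,
    ⟨h₁.cont.add k₁.cont, h₁.cont'.add k₁.cont', fun U t => (h₁.deriv U t).add (k₁.deriv U t)⟩,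
    ⟨h₂.cont.add k₂.cont, h₂.cont'.add k₂.cont', fun U t => (h₂.deriv U t).add (k₂.deriv U t)⟩,
    ?_⟩
  funext U
  ring

lemma CDeriv.mul (h : CDeriv Φ Ψ F F') (k : CDeriv Φ Ψ H H') :
    CDeriv Φ Ψ (fun U => F U * H U) (fun U => F' U * H U + F U * H' U) := by
  obtain ⟨F₁, F₂, h₁, h₂, rfl⟩ := h
  obtain ⟨H₁, H₂, k₁, k₂, rfl⟩ := k
  refine ⟨fun U => F₁ U * H U + F U * H₁ U, fun U => F₂ U * H U + F U * H₂ U,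
    ⟨h₁.cont.mul k₁.cont, (h₁.cont'.mul k₁.cont).add (h₁.cont.mul k₁.cont'),
      fun U t => (h₁.deriv U t).mul (k₁.deriv U t)⟩,
    ⟨h₂.cont.mul k₂.cont, (h₂.cont'.mul k₂.cont).add (h₂.cont.mul k₂.cont'),
      fun U t => (h₂.deriv U t).mul (k₂.deriv U t)⟩, ?_⟩
  funext U
  ring

lemma CDeriv.sum {ι : Type*} (s : Finset ι) {F F' : ι → G → ℂ}
    (h : ∀ i, CDeriv Φ Ψ (F i) (F' i)) :
    CDeriv Φ Ψ (fun U => ∑ i ∈ s, F i U) (fun U => ∑ i ∈ s, F' i U) := by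
  classical
  induction s using Finset.induction_on with
  | empty => simpa using CDeriv.const 0
  | insert a s ha ih => simpa [Finset.sum_insert ha] using (h a).add ih

lemma CDeriv.sub (h : CDeriv Φ Ψ F F') (k : CDeriv Φ Ψ H H') :
    CDeriv Φ Ψ (fun U => F U - H U) (fun U => F' U - H' U) :=
  (h.add ((CDeriv.const (-1)).mul k)).congr (fun _ => by ring) (fun _ => by ring)

lemma CDeriv.integral_eq_zero [CompactSpace G] [MeasurableSpace G] [BorelSpace G] {μ : Measure G}
    [IsProbabilityMeasure μ] (hΦ : InvFlow μ Φ) (hΨ : InvFlow μ Ψ) (h : CDeriv Φ Ψ F F') :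
    ∫ U, F' U ∂μ = 0 := by
  obtain ⟨F₁, F₂, h₁, h₂, rfl⟩ := h
  have hI : Integrable (fun U => Complex.I * F₂ U) μ :=
    continuous_integrable μ (continuous_const.mul h₂.cont')
  have hadd := integral_add (continuous_integrable μ h₁.cont') hI
  rw [integral_const_mul, h₁.integral_eq_zero hΦ, h₂.integral_eq_zero hΨ] at hadd
  simpa using hadd

end CDerivRules

/-! ### Infinitesimal translations on the unitary group -/

section Unitary

variable {n : Type*} [Fintype n] [DecidableEq n]

instance unitaryGroupBorelSpace : BorelSpace (Matrix.unitaryGroup n ℂ) := by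
  have : BorelSpace (Matrix n n ℂ) := inferInstanceAs (BorelSpace (n → n → ℂ))
  exact Subtype.borelSpace _

instance unitaryGroupCompactSpace : CompactSpace (Matrix.unitaryGroup n ℂ) := by
  have hc : IsClosed ((Matrix.unitaryGroup n ℂ : Set (Matrix n n ℂ))) := isClosed_unitary
  have hk : IsCompact (Set.pi Set.univ fun _ : n => Set.pi Set.univ fun _ : n =>
      Metric.closedBall (0 : ℂ) 1) :=
    isCompact_univ_pi fun _ => isCompact_univ_pi fun _ => isCompact_closedBall _ _
  refine isCompact_iff_compactSpace.1 (hk.of_isClosed_subset hc fun U hU i _ j _ => ?_)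
  simpa using entry_norm_bound_of_unitary hU i j

/-- The one-parameter group `t ↦ exp (tX)` for skew-Hermitian `X`. -/
noncomputable def expU (X : skewAdjoint (Matrix n n ℂ)) (t : ℝ) : Matrix.unitaryGroup n ℂ :=
  ⟨NormedSpace.exp (t • (X : Matrix n n ℂ)), by
    open scoped Matrix.Norms.L2Operator in
    let _ : NormedAlgebra ℚ (Matrix n n ℂ) := NormedAlgebra.restrictScalars ℚ ℂ _
    exact NormedSpace.exp_mem_unitary_of_mem_skewAdjoint (skewAdjoint.smul_mem t X.2)⟩

lemma expU_zero (X : skewAdjoint (Matrix n n ℂ)) : expU X 0 = 1 := by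
  apply Subtype.ext
  simp [expU]

lemma hasDerivAt_expU (X : skewAdjoint (Matrix n n ℂ)) (t : ℝ) (i j : n) :
    HasDerivAt (fun s => (expU X s : Matrix n n ℂ) i j)
      (((X : Matrix n n ℂ) * (expU X t : Matrix n n ℂ)) i j) t := by
  open scoped Matrix.Norms.L2Operator in
  have h := hasDerivAt_exp_smul_const' (𝕂 := ℝ) (X : Matrix n n ℂ) t
  exact ((Matrix.entryLinearMap ℝ ℂ i j).toContinuousLinearMap.hasFDerivAt.comp_hasDerivAt t h)

lemma hasDerivAt_expU' (X : skewAdjoint (Matrix n n ℂ)) (t : ℝ) (i j : n) :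
    HasDerivAt (fun s => (expU X s : Matrix n n ℂ) i j)
      (((expU X t : Matrix n n ℂ) * (X : Matrix n n ℂ)) i j) t := by
  open scoped Matrix.Norms.L2Operator in
  have h := hasDerivAt_exp_smul_const (𝕂 := ℝ) (X : Matrix n n ℂ) t
  exact ((Matrix.entryLinearMap ℝ ℂ i j).toContinuousLinearMap.hasFDerivAt.comp_hasDerivAt t h)

lemma continuous_entry_s7 (i j : n) :
    Continuous fun U : Matrix.unitaryGroup n ℂ => (U : Matrix n n ℂ) i j :=
  continuous_subtype_val.matrix_elem i j

lemma FlowDeriv.star {G : Type*} [TopologicalSpace G] {Φ : ℝ → G → G} {F F' : G → ℂ}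
    (h : FlowDeriv Φ F F') : FlowDeriv Φ (fun U => star (F U)) (fun U => star (F' U)) :=
  ⟨h.cont.star, h.cont'.star, fun U t => (h.deriv U t).star⟩

/-- Left translation by `exp (tX)`. -/
noncomputable def leftFlow (X : skewAdjoint (Matrix n n ℂ)) (t : ℝ)
    (U : Matrix.unitaryGroup n ℂ) : Matrix.unitaryGroup n ℂ := expU X t * U

/-- Right translation by `exp (tX)`. -/
noncomputable def rightFlow (X : skewAdjoint (Matrix n n ℂ)) (t : ℝ)
    (U : Matrix.unitaryGroup n ℂ) : Matrix.unitaryGroup n ℂ := U * expU X t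

lemma leftFlow_inv (μ : Measure (Matrix.unitaryGroup n ℂ)) [μ.IsMulLeftInvariant]
    (X : skewAdjoint (Matrix n n ℂ)) : InvFlow μ (leftFlow X) where
  zero U := by simp [leftFlow, expU_zero]
  cont t := continuous_const.mul continuous_id
  inv t F := integral_mul_left_eq_self F (expU X t)

/-- A Haar measure on the (compact) unitary group is also right-invariant, since its image under
right translation is again a left-invariant probability measure. -/
lemma haar_isMulRightInvariant (μ : Measure (Matrix.unitaryGroup n ℂ)) [μ.IsHaarMeasure]
    [IsProbabilityMeasure μ] : μ.IsMulRightInvariant where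
  map_mul_right_eq_self g := by
    have : IsProbabilityMeasure (μ.map (· * g)) :=
      Measure.isProbabilityMeasure_map (continuous_mul_const g).aemeasurable
    exact Measure.isHaarMeasure_eq_of_isProbabilityMeasure _ _

lemma rightFlow_inv (μ : Measure (Matrix.unitaryGroup n ℂ)) [μ.IsMulRightInvariant]
    (X : skewAdjoint (Matrix n n ℂ)) : InvFlow μ (rightFlow X) where
  zero U := by simp [rightFlow, expU_zero]
  cont t := continuous_id.mul continuous_const
  inv t F := integral_mul_right_eq_self F (expU X t)

lemma leftFlow_entry (X : skewAdjoint (Matrix n n ℂ)) (i j : n) :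
    FlowDeriv (leftFlow X) (fun U => (U : Matrix n n ℂ) i j)
      (fun U => ((X : Matrix n n ℂ) * (U : Matrix n n ℂ)) i j) where
  cont := continuous_entry_s7 i j
  cont' := (continuous_const.matrix_mul continuous_subtype_val).matrix_elem i j
  deriv U t := by
    have h := HasDerivAt.fun_sum (u := Finset.univ) fun k _ =>
      (hasDerivAt_expU X t i k).mul_const ((U : Matrix n n ℂ) k j)
    have e : ((X : Matrix n n ℂ) * (leftFlow X t U : Matrix n n ℂ)) i j =
        ∑ k, ((X : Matrix n n ℂ) * (expU X t : Matrix n n ℂ)) i k * (U : Matrix n n ℂ) k j := by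
      rw [← Matrix.mul_apply, Matrix.mul_assoc]
      rfl
    rw [e]
    exact h

lemma rightFlow_entry (X : skewAdjoint (Matrix n n ℂ)) (i j : n) :
    FlowDeriv (rightFlow X) (fun U => (U : Matrix n n ℂ) i j)
      (fun U => ((U : Matrix n n ℂ) * (X : Matrix n n ℂ)) i j) where
  cont := continuous_entry_s7 i j
  cont' := (continuous_subtype_val.matrix_mul continuous_const).matrix_elem i j
  deriv U t := by
    have h := HasDerivAt.fun_sum (u := Finset.univ) fun k _ =>
      (hasDerivAt_expU' X t k j).const_mul ((U : Matrix n n ℂ) i k)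
    have e : ((rightFlow X t U : Matrix n n ℂ) * (X : Matrix n n ℂ)) i j =
        ∑ k, (U : Matrix n n ℂ) i k * ((expU X t : Matrix n n ℂ) * (X : Matrix n n ℂ)) k j := by
      rw [← Matrix.mul_apply, ← Matrix.mul_assoc]
      rfl
    rw [e]
    exact h

/-- The skew-Hermitian part `(X - Xᴴ) / 2`. -/
noncomputable def skewRe (X : Matrix n n ℂ) : skewAdjoint (Matrix n n ℂ) :=
  ⟨(1 / 2 : ℂ) • (X - Xᴴ), by
    rw [skewAdjoint.mem_iff, star_eq_conjTranspose, conjTranspose_smul, conjTranspose_sub,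
      conjTranspose_conjTranspose, ← smul_neg, neg_sub]
    simp⟩

/-- The skew-Hermitian matrix `(X + Xᴴ) / (2i)`, so that `X = skewRe X + i • skewIm X`. -/
noncomputable def skewIm (X : Matrix n n ℂ) : skewAdjoint (Matrix n n ℂ) :=
  ⟨(-Complex.I / 2) • (X + Xᴴ), by
    rw [skewAdjoint.mem_iff, star_eq_conjTranspose, conjTranspose_smul, conjTranspose_add,
      conjTranspose_conjTranspose, add_comm, ← neg_smul]
    simp [neg_div]⟩

omit [Fintype n] [DecidableEq n] in
lemma skew_add (X : Matrix n n ℂ) :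
    (skewRe X : Matrix n n ℂ) + Complex.I • (skewIm X : Matrix n n ℂ) = X := by
  ext i j
  simp only [skewRe, skewIm, Matrix.add_apply, Matrix.smul_apply, Matrix.sub_apply, smul_eq_mul]
  linear_combination (-1 / 2 * (X i j + Xᴴ i j)) * Complex.I_sq

omit [Fintype n] [DecidableEq n] in
lemma skew_sub (X : Matrix n n ℂ) :
    (skewRe X : Matrix n n ℂ) - Complex.I • (skewIm X : Matrix n n ℂ) = -Xᴴ := by
  ext i j
  simp only [skewRe, skewIm, Matrix.add_apply, Matrix.smul_apply, Matrix.sub_apply, smul_eq_mul,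
    Matrix.neg_apply]
  linear_combination (1 / 2 * (X i j + Xᴴ i j)) * Complex.I_sq

omit [DecidableEq n] in
lemma skew_add_mul (X M : Matrix n n ℂ) (i j : n) :
    ((skewRe X : Matrix n n ℂ) * M) i j + Complex.I * ((skewIm X : Matrix n n ℂ) * M) i j =
      (X * M) i j := by
  simpa [Matrix.add_mul] using congrArg (fun Y => (Y * M) i j) (skew_add X)

omit [DecidableEq n] in
lemma mul_skew_add (X M : Matrix n n ℂ) (i j : n) :
    (M * (skewRe X : Matrix n n ℂ)) i j + Complex.I * (M * (skewIm X : Matrix n n ℂ)) i j =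
      (M * X) i j := by
  simpa [Matrix.mul_add] using congrArg (fun Y => (M * Y) i j) (skew_add X)

omit [DecidableEq n] in
lemma skew_sub_mul (X M : Matrix n n ℂ) (i j : n) :
    ((skewRe X : Matrix n n ℂ) * M) i j - Complex.I * ((skewIm X : Matrix n n ℂ) * M) i j =
      -(Xᴴ * M) i j := by
  simpa [Matrix.sub_mul] using congrArg (fun Y => (Y * M) i j) (skew_sub X)

omit [DecidableEq n] in
lemma mul_skew_sub (X M : Matrix n n ℂ) (i j : n) :
    (M * (skewRe X : Matrix n n ℂ)) i j - Complex.I * (M * (skewIm X : Matrix n n ℂ)) i j =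
      -(M * Xᴴ) i j := by
  simpa [Matrix.mul_sub] using congrArg (fun Y => (M * Y) i j) (skew_sub X)

/-- The derivative along left translation by the (complexified) matrix unit `E_{ab}`. -/
def LD (a b : n) (F F' : Matrix.unitaryGroup n ℂ → ℂ) : Prop :=
  CDeriv (leftFlow (skewRe (Matrix.single a b 1))) (leftFlow (skewIm (Matrix.single a b 1))) F F'

/-- The derivative along right translation by the (complexified) matrix unit `E_{ba}`. -/
def RD (a b : n) (F F' : Matrix.unitaryGroup n ℂ → ℂ) : Prop :=
  CDeriv (rightFlow (skewRe (Matrix.single b a 1))) (rightFlow (skewIm (Matrix.single b a 1))) F F'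

lemma LD_entry (a b i j : n) : LD a b (fun U => (U : Matrix n n ℂ) i j)
    (fun U => if i = a then (U : Matrix n n ℂ) b j else 0) := by
  refine ⟨_, _, leftFlow_entry _ i j, leftFlow_entry _ i j, ?_⟩
  funext U
  rw [skew_add_mul]
  by_cases h : i = a
  · subst h; simp
  · simp [h]

lemma RD_entry (a b i j : n) : RD a b (fun U => (U : Matrix n n ℂ) i j)
    (fun U => if j = a then (U : Matrix n n ℂ) i b else 0) := by
  refine ⟨_, _, rightFlow_entry _ i j, rightFlow_entry _ i j, ?_⟩
  funext U
  rw [mul_skew_add]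
  by_cases h : j = a
  · subst h; simp
  · simp [h]

lemma star_add_I_mul_star (z w : ℂ) :
    star z + Complex.I * star w = star (z - Complex.I * w) := by
  simp

lemma LD_star (a b i j : n) : LD a b (fun U => star ((U : Matrix n n ℂ) i j))
    (fun U => -(if i = b then star ((U : Matrix n n ℂ) a j) else 0)) := by
  refine ⟨_, _, (leftFlow_entry _ i j).star, (leftFlow_entry _ i j).star, ?_⟩
  funext U
  rw [star_add_I_mul_star, skew_sub_mul]
  by_cases h : i = b
  · subst h; simp
  · simp [h]

lemma RD_star (a b i j : n) : RD a b (fun U => star ((U : Matrix n n ℂ) i j))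
    (fun U => -(if j = b then star ((U : Matrix n n ℂ) i a) else 0)) := by
  refine ⟨_, _, (rightFlow_entry _ i j).star, (rightFlow_entry _ i j).star, ?_⟩
  funext U
  rw [star_add_I_mul_star, mul_skew_sub]
  by_cases h : j = b
  · subst h; simp
  · simp [h]

lemma LD.integral_eq_zero {μ : Measure (Matrix.unitaryGroup n ℂ)} [μ.IsHaarMeasure]
    [IsProbabilityMeasure μ] {a b : n} {F F' : Matrix.unitaryGroup n ℂ → ℂ} (h : LD a b F F') :
    ∫ U, F' U ∂μ = 0 :=
  CDeriv.integral_eq_zero (leftFlow_inv μ _) (leftFlow_inv μ _) h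

lemma RD.integral_eq_zero {μ : Measure (Matrix.unitaryGroup n ℂ)} [μ.IsHaarMeasure]
    [IsProbabilityMeasure μ] {a b : n} {F F' : Matrix.unitaryGroup n ℂ → ℂ} (h : RD a b F F') :
    ∫ U, F' U ∂μ = 0 :=
  have := haar_isMulRightInvariant μ
  CDeriv.integral_eq_zero (rightFlow_inv μ _) (rightFlow_inv μ _) h

/-! ### Averaging the columns orthogonal to a fixed column -/

/-- `F` is infinitesimally invariant under the right translations that mix only columns other
than column `o`. -/
def ColNull (o : n) (F : Matrix.unitaryGroup n ℂ → ℂ) : Prop :=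
  ∀ a b, a ≠ o → b ≠ o → RD a b F (fun _ => 0)

lemma ColNull.mul {o : n} {F H : Matrix.unitaryGroup n ℂ → ℂ} (hF : ColNull o F)
    (hH : ColNull o H) : ColNull o (fun U => F U * H U) := fun a b ha hb =>
  CDeriv.congr (CDeriv.mul (hF a b ha hb) (hH a b ha hb)) (fun _ => rfl) (fun _ => by ring)

lemma ColNull.sub {o : n} {F H : Matrix.unitaryGroup n ℂ → ℂ} (hF : ColNull o F)
    (hH : ColNull o H) : ColNull o (fun U => F U - H U) := fun a b ha hb =>
  CDeriv.congr (CDeriv.sub (hF a b ha hb) (hH a b ha hb)) (fun _ => rfl) (fun _ => by ring)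

lemma ColNull.sum {o : n} {ι : Type*} (s : Finset ι) {F : ι → Matrix.unitaryGroup n ℂ → ℂ}
    (hF : ∀ i, ColNull o (F i)) : ColNull o (fun U => ∑ i ∈ s, F i U) := fun a b ha hb =>
  CDeriv.congr (CDeriv.sum s fun i => hF i a b ha hb) (fun _ => rfl) (fun _ => by simp)

lemma ColNull.const {o : n} (c : ℂ) : ColNull o (fun _ => c) := fun _ _ _ _ => CDeriv.const c

lemma ColNull.entry (o x : n) : ColNull o (fun U => (U : Matrix n n ℂ) x o) := fun a b ha _ =>
  CDeriv.congr (RD_entry a b x o) (fun _ => rfl) (fun _ => if_neg (Ne.symm ha))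

lemma ColNull.star_entry (o x : n) : ColNull o (fun U => star ((U : Matrix n n ℂ) x o)) :=
  fun a b _ hb =>
  CDeriv.congr (RD_star a b x o) (fun _ => rfl) (fun _ => by rw [if_neg (Ne.symm hb), neg_zero])

/-- The sesquilinear form `⟨u_i, B u_j⟩` in the columns of `U`, where `B` may depend on `U`. -/
noncomputable def Q (B : Matrix.unitaryGroup n ℂ → Matrix n n ℂ) (i j : n)
    (U : Matrix.unitaryGroup n ℂ) : ℂ := ((U : Matrix n n ℂ)ᴴ * B U * (U : Matrix n n ℂ)) i j

omit [DecidableEq n] in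
lemma mul_mul_apply_eq_sum (U B : Matrix n n ℂ) (i j : n) :
    (Uᴴ * B * U) i j = ∑ x, ∑ y, star (U y i) * B y x * U x j := by
  simp [Matrix.mul_apply, Finset.sum_mul]

/-- Along the translation mixing columns `a` and `b` only the two outer columns of `⟨u_i, B u_j⟩`
are differentiated, since the derivative of `B` vanishes. -/
lemma Q_deriv {o : n} {B : Matrix.unitaryGroup n ℂ → Matrix n n ℂ}
    (hB : ∀ x y, ColNull o (fun U => B U x y)) {a b : n} (ha : a ≠ o) (hb : b ≠ o) (i j : n) :
    RD a b (Q B i j)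
      (fun U => (if j = a then Q B i b U else 0) - (if i = b then Q B a j U else 0)) := by
  refine CDeriv.congr (CDeriv.sum Finset.univ fun x => CDeriv.sum Finset.univ fun y =>
    CDeriv.mul (CDeriv.mul (RD_star a b y i) (hB y x a b ha hb)) (RD_entry a b x j))
    (fun U => (mul_mul_apply_eq_sum _ _ _ _).symm) (fun U => ?_)
  by_cases h : j = a <;> by_cases h' : i = b <;>
    simp [h, h', Q, mul_mul_apply_eq_sum, Finset.sum_add_distrib, sub_eq_add_neg, add_comm]

lemma ColNull.Q {o : n} {B : Matrix.unitaryGroup n ℂ → Matrix n n ℂ}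
    (hB : ∀ x y, ColNull o (fun U => B U x y)) : ColNull o (Q B o o) := fun a b ha hb =>
  CDeriv.congr (Q_deriv hB ha hb o o) (fun _ => rfl)
    (fun _ => by rw [if_neg (Ne.symm ha), if_neg (Ne.symm hb), sub_zero])

lemma ColNull.matrix_mul {o : n} {A B : Matrix.unitaryGroup n ℂ → Matrix n n ℂ}
    (hA : ∀ x y, ColNull o (fun U => A U x y)) (hB : ∀ x y, ColNull o (fun U => B U x y))
    (x y : n) : ColNull o (fun U => (A U * B U) x y) := by
  simp only [Matrix.mul_apply]
  exact ColNull.sum _ fun z => (hA x z).mul (hB z y)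

lemma ColNull.continuous {o i : n} (hi : i ≠ o) {F : Matrix.unitaryGroup n ℂ → ℂ}
    (hF : ColNull o F) : Continuous F := CDeriv.continuous (hF i i hi hi)

lemma Q_continuous {o i₁ : n} (hi : i₁ ≠ o) {B : Matrix.unitaryGroup n ℂ → Matrix n n ℂ}
    (hB : ∀ x y, ColNull o (fun U => B U x y)) (i j : n) : Continuous (Q B i j) :=
  CDeriv.continuous (Q_deriv hB hi hi i j)

lemma unitary_mul_star (U : Matrix.unitaryGroup n ℂ) :
    (U : Matrix n n ℂ) * (U : Matrix n n ℂ)ᴴ = 1 := Matrix.mem_unitaryGroup_iff.1 U.2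

lemma sum_erase_Q (B : Matrix.unitaryGroup n ℂ → Matrix n n ℂ) (o : n)
    (U : Matrix.unitaryGroup n ℂ) :
    ∑ j ∈ Finset.univ.erase o, Q B j j U = (B U).trace - Q B o o U := by
  have h : (B U).trace = ∑ j, Q B j j U := by
    have : ∑ j, Q B j j U = ((U : Matrix n n ℂ)ᴴ * B U * (U : Matrix n n ℂ)).trace := rfl
    rw [this, Matrix.mul_assoc, Matrix.trace_mul_comm, Matrix.mul_assoc, unitary_mul_star,
      Matrix.mul_one]
  rw [h, ← Finset.sum_erase_add _ _ (Finset.mem_univ o), add_sub_cancel_right]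

/-- If each `f j`, for `j ≠ o`, has the same integral `c`, then `(N - 1) c = ∫ ∑_{j ≠ o} f j`. -/
lemma card_sub_one_mul {μ : Measure (Matrix.unitaryGroup n ℂ)} [IsProbabilityMeasure μ] (o : n)
    {f : n → Matrix.unitaryGroup n ℂ → ℂ} (hf : ∀ j, Continuous (f j)) {c : ℂ}
    (h : ∀ j, j ≠ o → ∫ U, f j U ∂μ = c) :
    ((Fintype.card n : ℂ) - 1) * c = ∫ U, ∑ j ∈ Finset.univ.erase o, f j U ∂μ := by
  rw [integral_finsetSum _ fun j _ => continuous_integrable μ (hf j),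
    Finset.sum_congr rfl fun j hj => h j (Finset.ne_of_mem_erase hj), Finset.sum_const,
    Finset.card_erase_of_mem (Finset.mem_univ o), Finset.card_univ, nsmul_eq_mul,
    Nat.cast_sub (Fintype.card_pos_iff.2 ⟨o⟩), Nat.cast_one]

variable {μ : Measure (Matrix.unitaryGroup n ℂ)} [μ.IsHaarMeasure] [IsProbabilityMeasure μ]

/-- Conditionally on column `o`, the projector onto another column averages to
`(1 - |u_o⟩⟨u_o|) / (N - 1)`. -/
lemma column_average {o i : n} (hi : i ≠ o) {B : Matrix.unitaryGroup n ℂ → Matrix n n ℂ}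
    (hB : ∀ x y, ColNull o (fun U => B U x y)) {f : Matrix.unitaryGroup n ℂ → ℂ}
    (hf : ColNull o f) :
    ((Fintype.card n : ℂ) - 1) * ∫ U, Q B i i U * f U ∂μ =
      ∫ U, ((B U).trace - Q B o o U) * f U ∂μ := by
  have hfc := hf.continuous hi
  rw [card_sub_one_mul (μ := μ) o (f := fun j U => Q B j j U * f U)
    (fun j => (Q_continuous hi hB j j).mul hfc)]
  · simp_rw [← Finset.sum_mul, sum_erase_Q]
  · intro j hj
    have h := RD.integral_eq_zero (μ := μ)
      (CDeriv.mul (Q_deriv hB hj hi i j) (hf j i hj hi))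
    simp only [if_true, mul_zero, add_zero, sub_mul] at h
    have hm : ∀ k, Continuous fun U => Q B k k U * f U := fun k => (Q_continuous hi hB k k).mul hfc
    rw [integral_sub (continuous_integrable μ (hm i)) (continuous_integrable μ (hm j))] at h
    exact (sub_eq_zero.1 h).symm

/-- First relation between `E[q₁₁ q₂₂]` and `E[q₁₂ q₂₁]`, where `q_ij = ⟨u_i, A u_j⟩`.  The
rotation of column `i₂` into column `j` gives `E[q₁₁ q_jj] = E[q₁₁ q₂₂]` for `j ≠ i₁`, with the
correction `E[q₁₂ q₂₁]` at `j = i₁`; summing over `j ≠ o` completes the trace of `A`. -/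
lemma two_column_direct {o i₁ i₂ : n} (h₁ : i₁ ≠ o) (h₂ : i₂ ≠ o) (h₁₂ : i₁ ≠ i₂)
    {A : Matrix.unitaryGroup n ℂ → Matrix n n ℂ} (hA : ∀ x y, ColNull o (fun U => A U x y)) :
    ((Fintype.card n : ℂ) - 1) * ∫ U, Q A i₁ i₁ U * Q A i₂ i₂ U ∂μ
      + ∫ U, Q A i₁ i₂ U * Q A i₂ i₁ U ∂μ =
      ∫ U, Q A i₁ i₁ U * ((A U).trace - Q A o o U) ∂μ := by
  have hc := fun i j => Q_continuous h₁ hA i j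
  have hm : ∀ i j k l, Continuous fun U => Q A i j U * Q A k l U :=
    fun i j k l => (hc i j).mul (hc k l)
  have hcc := fun i j k l => continuous_integrable μ (hm i j k l)
  have hd : Continuous fun U => ∑ j ∈ Finset.univ.erase o, Q A i₁ i₁ U * Q A j j U :=
    continuous_finsetSum _ fun j _ => (hc i₁ i₁).mul (hc j j)
  rw [card_sub_one_mul (μ := μ) o (f := fun j U => Q A i₁ i₁ U * Q A j j U
    - if i₁ = j then Q A i₁ i₂ U * Q A i₂ j U else 0)]
  · simp only [Finset.sum_sub_distrib, Finset.sum_ite_eq, Finset.mem_erase, ne_eq, h₁,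
      not_false_eq_true, Finset.mem_univ, and_self, if_true]
    rw [integral_sub (continuous_integrable μ hd) (hcc i₁ i₂ i₂ i₁), sub_add_cancel]
    simp_rw [← Finset.mul_sum, sum_erase_Q]
  · intro j
    refine ((hc i₁ i₁).mul (hc j j)).sub ?_
    split_ifs
    exacts [(hc i₁ i₂).mul (hc i₂ j), continuous_const]
  · intro j hj
    have h := RD.integral_eq_zero (μ := μ)
      (CDeriv.mul (Q_deriv hA hj h₂ i₁ i₁) (Q_deriv hA hj h₂ i₂ j))
    have hs : Continuous fun U => if i₁ = j then Q A i₁ i₂ U * Q A i₂ j U else 0 := by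
      split_ifs
      exacts [(hc i₁ i₂).mul (hc i₂ j), continuous_const]
    rw [integral_sub (hcc i₁ i₁ j j) (continuous_integrable μ hs)]
    simp only [h₁₂, if_true, if_false, sub_zero, mul_sub, ite_mul, zero_mul] at h
    have hd' : Continuous fun U => Q A i₁ i₁ U * Q A i₂ i₂ U - Q A i₁ i₁ U * Q A j j U :=
      (hm _ _ _ _).sub (hm _ _ _ _)
    rw [integral_add (continuous_integrable μ hs) (continuous_integrable μ hd'),
      integral_sub (hcc _ _ _ _) (hcc _ _ _ _)] at h
    linear_combination -h

/-- Second relation between `E[q₁₁ q₂₂]` and `E[q₁₂ q₂₁]`: the rotation of column `i₁` into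
column `j` gives `E[q₂ⱼ qⱼ₂] = E[q₂₁ q₁₂]` for `j ≠ i₂`, with the correction `E[q₁₁ q₂₂]` at
`j = i₂`. -/
lemma two_column_exchange {o i₁ i₂ : n} (h₁ : i₁ ≠ o) (h₂ : i₂ ≠ o) (h₁₂ : i₁ ≠ i₂)
    {A : Matrix.unitaryGroup n ℂ → Matrix n n ℂ} (hA : ∀ x y, ColNull o (fun U => A U x y)) :
    ((Fintype.card n : ℂ) - 1) * ∫ U, Q A i₁ i₂ U * Q A i₂ i₁ U ∂μ
      + ∫ U, Q A i₁ i₁ U * Q A i₂ i₂ U ∂μ =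
      ∫ U, ∑ j ∈ Finset.univ.erase o, Q A i₂ j U * Q A j i₂ U ∂μ := by
  have hc := fun i j => Q_continuous h₁ hA i j
  have hm : ∀ i j k l, Continuous fun U => Q A i j U * Q A k l U :=
    fun i j k l => (hc i j).mul (hc k l)
  have hcc := fun i j k l => continuous_integrable μ (hm i j k l)
  have hd : Continuous fun U => ∑ j ∈ Finset.univ.erase o, Q A i₂ j U * Q A j i₂ U :=
    continuous_finsetSum _ fun j _ => (hc i₂ j).mul (hc j i₂)
  rw [card_sub_one_mul (μ := μ) o (f := fun j U => Q A i₂ j U * Q A j i₂ U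
    - if i₂ = j then Q A i₁ i₁ U * Q A i₂ j U else 0)]
  · simp only [Finset.sum_sub_distrib, Finset.sum_ite_eq, Finset.mem_erase, ne_eq, h₂,
      not_false_eq_true, Finset.mem_univ, and_self, if_true]
    rw [integral_sub (continuous_integrable μ hd) (hcc i₁ i₁ i₂ i₂), sub_add_cancel]
  · intro j
    refine ((hc i₂ j).mul (hc j i₂)).sub ?_
    split_ifs
    exacts [(hc i₁ i₁).mul (hc i₂ j), continuous_const]
  · intro j hj
    have h := RD.integral_eq_zero (μ := μ)
      (CDeriv.mul (Q_deriv hA hj h₁ i₁ i₂) (Q_deriv hA hj h₁ i₂ j))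
    have hs : Continuous fun U => if i₂ = j then Q A i₁ i₁ U * Q A i₂ j U else 0 := by
      split_ifs
      exacts [(hc i₁ i₁).mul (hc i₂ j), continuous_const]
    rw [integral_sub (hcc i₂ j j i₂) (continuous_integrable μ hs)]
    simp only [h₁₂.symm, if_true, if_false, sub_zero, sub_mul, ite_mul, zero_mul] at h
    have hd' : Continuous fun U => (if i₂ = j then Q A i₁ i₁ U * Q A i₂ j U else 0) -
        Q A j i₂ U * Q A i₂ j U := hs.sub (hm _ _ _ _)
    rw [integral_add (continuous_integrable μ hd') (hcc _ _ _ _),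
      integral_sub (continuous_integrable μ hs) (hcc _ _ _ _)] at h
    have e : ∫ U, Q A i₂ j U * Q A j i₂ U ∂μ = ∫ U, Q A j i₂ U * Q A i₂ j U ∂μ := by
      simp_rw [mul_comm]
    rw [e]
    linear_combination -h

/-- The rank-one projector onto column `o`. -/
noncomputable def colProj (o : n) (U : Matrix.unitaryGroup n ℂ) : Matrix n n ℂ :=
  Matrix.of fun x y => (U : Matrix n n ℂ) x o * star ((U : Matrix n n ℂ) y o)

/-- Two forms joined through `u_o` are one form, because `colProj o U = |u_o⟩⟨u_o|`. -/
lemma Q_mul_Q (A : Matrix.unitaryGroup n ℂ → Matrix n n ℂ) (i j o : n)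
    (U : Matrix.unitaryGroup n ℂ) :
    Q A i o U * Q A o j U = Q (fun U => A U * colProj o U * A U) i j U := by
  have h : colProj o U = (U : Matrix n n ℂ) * Matrix.single o o 1 * (U : Matrix n n ℂ)ᴴ := by
    ext x y
    simp [colProj, Matrix.mul_apply, Matrix.single_apply, ite_and]
  have e : (U : Matrix n n ℂ)ᴴ * (A U * colProj o U * A U) * (U : Matrix n n ℂ) =
      ((U : Matrix n n ℂ)ᴴ * A U * (U : Matrix n n ℂ)) * Matrix.single o o 1 *
        ((U : Matrix n n ℂ)ᴴ * A U * (U : Matrix n n ℂ)) := by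
    rw [h]
    simp only [Matrix.mul_assoc]
  simp only [Q]
  rw [e]
  simp [Matrix.mul_apply, Matrix.single_apply, ite_and]

lemma sum_Q_mul_Q (A : Matrix.unitaryGroup n ℂ → Matrix n n ℂ) (i j : n)
    (U : Matrix.unitaryGroup n ℂ) :
    ∑ k, Q A i k U * Q A k j U = Q (fun U => A U * A U) i j U := by
  simp only [Q]
  rw [← Matrix.mul_apply]
  refine congrFun (congrFun ?_ i) j
  calc (U : Matrix n n ℂ)ᴴ * A U * (U : Matrix n n ℂ) *
        ((U : Matrix n n ℂ)ᴴ * A U * (U : Matrix n n ℂ))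
      = (U : Matrix n n ℂ)ᴴ * A U * ((U : Matrix n n ℂ) * (U : Matrix n n ℂ)ᴴ) *
          (A U * (U : Matrix n n ℂ)) := by
        simp only [Matrix.mul_assoc]
    _ = _ := by rw [unitary_mul_star]; simp only [Matrix.mul_assoc, Matrix.one_mul]

lemma colProj_trace (A : Matrix.unitaryGroup n ℂ → Matrix n n ℂ) (o : n)
    (U : Matrix.unitaryGroup n ℂ) :
    (A U * colProj o U * A U).trace = Q (fun U => A U * A U) o o U := by
  have h : colProj o U = (U : Matrix n n ℂ) * Matrix.single o o 1 * (U : Matrix n n ℂ)ᴴ := by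
    ext x y
    simp [colProj, Matrix.mul_apply, Matrix.single_apply, ite_and]
  have e : (A U * colProj o U * A U).trace =
      (Matrix.single o o 1 * ((U : Matrix n n ℂ)ᴴ * (A U * A U) * (U : Matrix n n ℂ))).trace := by
    rw [h, Matrix.trace_mul_comm, ← Matrix.mul_assoc, ← Matrix.mul_assoc, ← Matrix.mul_assoc,
      Matrix.trace_mul_comm, ← Matrix.mul_assoc, Matrix.trace_mul_comm]
    simp only [Matrix.mul_assoc]
  rw [e]
  simp [Q, Matrix.trace, Matrix.mul_apply, Matrix.single_apply, ite_and]

/-- The integral over two further columns reduced to invariants of the fixed column `o`, obtained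
by eliminating `E[q₁₂ q₂₁]` from the direct and the exchange relation. -/
lemma two_column_average {o i₁ i₂ : n} (h₁ : i₁ ≠ o) (h₂ : i₂ ≠ o) (h₁₂ : i₁ ≠ i₂)
    {A : Matrix.unitaryGroup n ℂ → Matrix n n ℂ} (hA : ∀ x y, ColNull o (fun U => A U x y)) :
    let M : ℂ := (Fintype.card n : ℂ) - 1
    M * (M ^ 2 - 1) * ∫ U, Q A i₁ i₁ U * Q A i₂ i₂ U ∂μ =
      M * ∫ U, ((A U).trace - Q A o o U) ^ 2 ∂μ -
      ∫ U, ((A U * A U).trace - 2 * Q (fun U => A U * A U) o o U + Q A o o U ^ 2) ∂μ := by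
  intro M
  have hAA := ColNull.matrix_mul hA hA
  have hP : ∀ x y, ColNull o (fun U => colProj o U x y) := fun x y =>
    (ColNull.entry o x).mul (ColNull.star_entry o y)
  have hAPA := ColNull.matrix_mul (ColNull.matrix_mul hA hP) hA
  have htr : ColNull o (fun U => (A U).trace) := ColNull.sum _ fun x => hA x x
  have a1 := two_column_direct (μ := μ) h₁ h₂ h₁₂ hA
  have a2 := column_average (μ := μ) h₁ hA (htr.sub (ColNull.Q hA))
  have a3 := two_column_exchange (μ := μ) h₁ h₂ h₁₂ hA
  have a4 := column_average (μ := μ) h₂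
    (B := fun U => A U * A U - A U * colProj o U * A U)
    (fun x y => (hAA x y).sub (hAPA x y)) (ColNull.const 1)
  have hQsub : ∀ i U, Q (fun U => A U * A U - A U * colProj o U * A U) i i U =
      Q (fun U => A U * A U) i i U - Q A i o U * Q A o i U := by
    intro i U
    rw [Q_mul_Q]
    simp [Q, Matrix.mul_sub, Matrix.sub_mul]
  have e4 : ∀ U, ∑ j ∈ Finset.univ.erase o, Q A i₂ j U * Q A j i₂ U =
      Q (fun U => A U * A U - A U * colProj o U * A U) i₂ i₂ U := by
    intro U
    rw [hQsub, ← sum_Q_mul_Q, ← Finset.sum_erase_add _ _ (Finset.mem_univ o), add_sub_cancel_right]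
  simp only [mul_one, hQsub, Matrix.trace_sub, colProj_trace] at a4
  simp only [e4, hQsub] at a3
  have e2 : ∀ U, ((A U).trace - Q A o o U) ^ 2 =
      ((A U).trace - Q A o o U) * ((A U).trace - Q A o o U) := fun U => sq _
  have e5 : ∀ U, (A U * A U).trace - 2 * Q (fun U => A U * A U) o o U + Q A o o U ^ 2 =
      (A U * A U).trace - Q (fun U => A U * A U) o o U -
        (Q (fun U => A U * A U) o o U - Q A o o U * Q A o o U) := fun U => by ring
  simp only [e2, e5, ← a2, ← a4, ← a3, ← a1]
  ring

/-! ### Wick recursion for a single column -/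

/-- `Wirt o m F H` models a polynomial `F` in the entries `ψ_a = U a o` of column `o` and their
conjugates that is homogeneous of degree `m` in `ψ`, with `H b` its Wirtinger derivative in the
conjugate of `ψ_b`.  The witness `K a` plays the role of the derivative in `ψ_a`: the first
condition on it is the chain rule along the left translation by `E_{ab}`, which sends `ψ_a` to
`ψ_b` and `conj ψ_b` to `-conj ψ_a`, and the second is Euler's identity.  Only these two
consequences of polynomiality are recorded. -/
def Wirt (o : n) (m : ℂ) (F : Matrix.unitaryGroup n ℂ → ℂ)
    (H : n → Matrix.unitaryGroup n ℂ → ℂ) : Prop :=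
  (∀ b, Continuous (H b)) ∧ ∃ K : n → Matrix.unitaryGroup n ℂ → ℂ,
    (∀ a b, LD a b F
      (fun U => K a U * (U : Matrix n n ℂ) b o - H b U * star ((U : Matrix n n ℂ) a o))) ∧
    ∀ U : Matrix.unitaryGroup n ℂ, ∑ a, (U : Matrix n n ℂ) a o * K a U = m * F U

lemma Wirt.congr {o : n} {m m' : ℂ} {F F' : Matrix.unitaryGroup n ℂ → ℂ}
    {H H' : n → Matrix.unitaryGroup n ℂ → ℂ} (h : Wirt o m F H) (hm : m = m')
    (hF : ∀ U, F U = F' U) (hH : ∀ b U, H b U = H' b U) : Wirt o m' F' H' := by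
  obtain rfl : F = F' := funext hF
  obtain rfl : H = H' := funext fun b => funext (hH b)
  exact hm ▸ h

lemma Wirt.entry (o i : n) : Wirt o 1 (fun U => (U : Matrix n n ℂ) i o) (fun _ _ => 0) := by
  refine ⟨fun _ => continuous_const, fun a _ => if i = a then 1 else 0, fun a b => ?_, fun U => ?_⟩
  · exact CDeriv.congr (LD_entry a b i o) (fun _ => rfl) (fun U => by by_cases h : i = a <;> simp [h])
  · simp

lemma Wirt.star_entry (o j : n) : Wirt o 0 (fun U => star ((U : Matrix n n ℂ) j o))
    (fun b _ => if j = b then 1 else 0) := by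
  refine ⟨fun _ => continuous_const, fun _ _ => 0, fun a b => ?_, fun U => ?_⟩
  · exact CDeriv.congr (LD_star a b j o) (fun _ => rfl) (fun U => by by_cases h : j = b <;> simp [h])
  · simp

lemma Wirt.continuous {o : n} {m : ℂ} {F : Matrix.unitaryGroup n ℂ → ℂ}
    {H : n → Matrix.unitaryGroup n ℂ → ℂ} (h : Wirt o m F H) : Continuous F := by
  obtain ⟨-, K, hK, -⟩ := h
  exact CDeriv.continuous (hK o o)

lemma Wirt.mul {o : n} {m m' : ℂ} {F F' : Matrix.unitaryGroup n ℂ → ℂ}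
    {H H' : n → Matrix.unitaryGroup n ℂ → ℂ} (h : Wirt o m F H) (h' : Wirt o m' F' H') :
    Wirt o (m + m') (fun U => F U * F' U) (fun b U => H b U * F' U + F U * H' b U) := by
  have hF := h.continuous
  have hF' := h'.continuous
  obtain ⟨hH, K, hK, hE⟩ := h
  obtain ⟨hH', K', hK', hE'⟩ := h'
  refine ⟨fun b => ((hH b).mul hF').add (hF.mul (hH' b)), fun a U => K a U * F' U + F U * K' a U,
    fun a b => CDeriv.congr (CDeriv.mul (hK a b) (hK' a b)) (fun _ => rfl) (fun U => by ring),
    fun U => ?_⟩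
  calc ∑ a, (U : Matrix n n ℂ) a o * (K a U * F' U + F U * K' a U)
      = (∑ a, (U : Matrix n n ℂ) a o * K a U) * F' U
        + F U * ∑ a, (U : Matrix n n ℂ) a o * K' a U := by
        rw [Finset.sum_mul, Finset.mul_sum, ← Finset.sum_add_distrib]
        exact Finset.sum_congr rfl fun a _ => by ring
    _ = _ := by rw [hE, hE']; ring

lemma Wirt.sum {o : n} {m : ℂ} {ι : Type*} [Fintype ι] {F : ι → Matrix.unitaryGroup n ℂ → ℂ}
    {H : ι → n → Matrix.unitaryGroup n ℂ → ℂ} (h : ∀ i, Wirt o m (F i) (H i)) :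
    Wirt o m (fun U => ∑ i, F i U) (fun b U => ∑ i, H i b U) := by
  choose hH K hK hE using h
  refine ⟨fun b => continuous_finsetSum _ fun i _ => hH i b, fun a U => ∑ i, K i a U,
    fun a b => CDeriv.congr (CDeriv.sum Finset.univ fun i => hK i a b) (fun _ => rfl)
      (fun U => by simp [Finset.sum_mul]), fun U => ?_⟩
  simp_rw [Finset.mul_sum]
  rw [Finset.sum_comm]
  exact Finset.sum_congr rfl fun i _ => hE i U

lemma column_norm (U : Matrix.unitaryGroup n ℂ) (o : n) :
    ∑ a, (U : Matrix n n ℂ) a o * star ((U : Matrix n n ℂ) a o) = 1 := by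
  have h := congrFun (congrFun (Matrix.mem_unitaryGroup_iff'.1 U.2) o) o
  rw [Matrix.one_apply_eq, star_eq_conjTranspose, Matrix.mul_apply] at h
  rw [← h]
  exact Finset.sum_congr rfl fun a _ => mul_comm _ _

/-- The recursion `(N + m) E[ψ_b F] = E[∂F / ∂(conj ψ_b)]` for `F` of degree `m` in `ψ`.  It
comes from the invariance of `∫ ψ_a F` under the translations by `E_{ab}`, summed over `a`. -/
lemma Wirt.integral {o : n} {m : ℂ} {F : Matrix.unitaryGroup n ℂ → ℂ}
    {H : n → Matrix.unitaryGroup n ℂ → ℂ} (h : Wirt o m F H) (b : n) :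
    ((Fintype.card n : ℂ) + m) * ∫ U, (U : Matrix n n ℂ) b o * F U ∂μ = ∫ U, H b U ∂μ := by
  have hF := h.continuous
  obtain ⟨hH, K, hK, hE⟩ := h
  have hD := fun a => CDeriv.mul (LD_entry a b a o) (hK a b)
  have h0 := Finset.sum_eq_zero (s := Finset.univ) fun a _ =>
    LD.integral_eq_zero (μ := μ) (hD a)
  rw [← integral_finsetSum _ fun a _ => continuous_integrable μ (hD a).continuous'] at h0
  have e : ∀ U : Matrix.unitaryGroup n ℂ,
      (∑ a, ((if a = a then (U : Matrix n n ℂ) b o else 0) * F U + (U : Matrix n n ℂ) a o *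
        (K a U * (U : Matrix n n ℂ) b o - H b U * star ((U : Matrix n n ℂ) a o)))) =
      ((Fintype.card n : ℂ) + m) * ((U : Matrix n n ℂ) b o * F U) - H b U := by
    intro U
    calc _ = ∑ a, ((U : Matrix n n ℂ) b o * F U
          + ((U : Matrix n n ℂ) a o * K a U) * (U : Matrix n n ℂ) b o
          - ((U : Matrix n n ℂ) a o * star ((U : Matrix n n ℂ) a o)) * H b U) :=
          Finset.sum_congr rfl fun a _ => by rw [if_pos rfl]; ring
      _ = _ := by
          rw [Finset.sum_sub_distrib, Finset.sum_add_distrib, ← Finset.sum_mul, ← Finset.sum_mul,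
            ← Finset.sum_mul, hE, column_norm, Finset.sum_const, Finset.card_univ, nsmul_eq_mul]
          ring
  replace h0 := (integral_congr_ae (Filter.Eventually.of_forall fun U => (e U).symm)).trans h0
  have hc : Continuous fun U : Matrix.unitaryGroup n ℂ =>
      ((Fintype.card n : ℂ) + m) * ((U : Matrix n n ℂ) b o * F U) :=
    continuous_const.mul ((continuous_entry_s7 b o).mul hF)
  rw [integral_sub (continuous_integrable μ hc) (continuous_integrable μ (hH b)),
    integral_const_mul] at h0
  exact sub_eq_zero.1 h0

lemma Wirt.integral_sum {o : n} {m : ℂ} {ι : Type*} [Fintype ι]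
    {F : ι → Matrix.unitaryGroup n ℂ → ℂ} {H : ι → n → Matrix.unitaryGroup n ℂ → ℂ}
    (h : ∀ i, Wirt o m (F i) (H i)) (b : ι → n) :
    ((Fintype.card n : ℂ) + m) * ∫ U, ∑ i, (U : Matrix n n ℂ) (b i) o * F i U ∂μ =
      ∫ U, ∑ i, H i (b i) U ∂μ := by
  have hc : ∀ i, Continuous fun U : Matrix.unitaryGroup n ℂ =>
      (U : Matrix n n ℂ) (b i) o * F i U :=
    fun i => (continuous_entry_s7 (b i) o).mul (h i).continuous
  rw [integral_finsetSum _ fun i _ => continuous_integrable μ (hc i),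
    integral_finsetSum _ fun i _ => continuous_integrable μ ((h i).1 (b i)), Finset.mul_sum]
  exact Finset.sum_congr rfl fun i _ => (h i).integral (b i)

end Unitary

/-! ### Moments of the reduced state of one column -/

section Moments

variable {d₁ d₂ : ℕ}

/-- The entry of column `o` at the pair index `(a, k)`. -/
noncomputable def z (o : Fin (d₁ * d₂)) (U : Matrix.unitaryGroup (Fin (d₁ * d₂)) ℂ) (a : Fin d₁)
    (k : Fin d₂) : ℂ := (U : Matrix (Fin (d₁ * d₂)) (Fin (d₁ * d₂)) ℂ) (finProdFinEquiv (a, k)) o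

lemma sum_z (o : Fin (d₁ * d₂)) (U : Matrix.unitaryGroup (Fin (d₁ * d₂)) ℂ) (a b : Fin d₁) :
    ∑ k, z o U a k * star (z o U b k) = rho U o a b := rfl

lemma rho_trace (o : Fin (d₁ * d₂)) (U : Matrix.unitaryGroup (Fin (d₁ * d₂)) ℂ) :
    ∑ a, rho U o a a = 1 := by
  rw [← column_norm U o, ← finProdFinEquiv.sum_comp, Fintype.sum_prod_type]
  rfl

lemma Wirt.z (o : Fin (d₁ * d₂)) (c : Fin d₁) (k : Fin d₂) :
    Wirt o 1 (fun U => z o U c k) (fun _ _ => 0) := Wirt.entry o _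

lemma Wirt.star_z (o : Fin (d₁ * d₂)) (d : Fin d₁) (k : Fin d₂) :
    Wirt o 0 (fun U => star (_root_.z o U d k))
      (fun b _ => if d = (finProdFinEquiv.symm b).1 then
        (if k = (finProdFinEquiv.symm b).2 then 1 else 0) else 0) := by
  refine (Wirt.star_entry o (finProdFinEquiv (d, k))).congr rfl (fun _ => rfl) fun b _ => ?_
  obtain ⟨p, rfl⟩ := finProdFinEquiv.surjective b
  rw [← ite_and, Equiv.symm_apply_apply]
  simp only [EmbeddingLike.apply_eq_iff_eq, Prod.ext_iff]

lemma Wirt.rho (o : Fin (d₁ * d₂)) (c d : Fin d₁) :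
    Wirt o 1 (fun U => rho U o c d)
      (fun b U => if d = (finProdFinEquiv.symm b).1
        then _root_.z o U c (finProdFinEquiv.symm b).2 else 0) := by
  refine (Wirt.sum fun k : Fin d₂ => (Wirt.z o c k).mul (Wirt.star_z o d k)).congr (by norm_num)
    (fun U => sum_z o U c d) fun b U => ?_
  generalize finProdFinEquiv.symm b = p
  by_cases h : d = p.1 <;> simp [h]

/-- The purity `Tr ρ²`. -/
noncomputable def T2 (o : Fin (d₁ * d₂)) (U : Matrix.unitaryGroup (Fin (d₁ * d₂)) ℂ) : ℂ :=
  ∑ c, ∑ d, rho U o c d * rho U o d c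

/-- The third moment `Tr ρ³`. -/
noncomputable def T3 (o : Fin (d₁ * d₂)) (U : Matrix.unitaryGroup (Fin (d₁ * d₂)) ℂ) : ℂ :=
  ∑ c, ∑ d, ∑ e, rho U o c d * (rho U o d e * rho U o e c)

lemma Wirt.T2 (o : Fin (d₁ * d₂)) :
    Wirt o 2 (T2 o) (fun b U => 2 * ∑ f,
      _root_.z o U f (finProdFinEquiv.symm b).2 * _root_.rho U o (finProdFinEquiv.symm b).1 f) := by
  refine (Wirt.sum fun c : Fin d₁ => Wirt.sum fun d : Fin d₁ =>
    (Wirt.rho o c d).mul (Wirt.rho o d c)).congr (by norm_num) (fun U => rfl) fun b U => ?_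
  simp only [Finset.sum_add_distrib, ite_mul, mul_ite, zero_mul, mul_zero, Finset.sum_ite_eq',
    Finset.mem_univ, if_true, Finset.sum_ite_irrel, Finset.sum_const_zero, two_mul]
  congr 1
  exact Finset.sum_congr rfl fun f _ => mul_comm _ _

lemma T3_continuous (o : Fin (d₁ * d₂)) : Continuous (T3 o) :=
  (Wirt.sum fun c : Fin d₁ => Wirt.sum fun d : Fin d₁ => Wirt.sum fun e : Fin d₁ =>
    (Wirt.rho o c d).mul ((Wirt.rho o d e).mul (Wirt.rho o e c))).continuous

variable {μ : Measure (Matrix.unitaryGroup (Fin (d₁ * d₂)) ℂ)} [μ.IsHaarMeasure]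
  [IsProbabilityMeasure μ]

/-- Mean purity, from the recursion applied to `Tr ρ² = ∑ ψ_{ck} · conj ψ_{dk} ρ_{dc}`. -/
lemma integral_T2 (o : Fin (d₁ * d₂)) :
    ((d₁ : ℂ) * d₂ + 1) * ∫ U, T2 o U ∂μ = d₁ + d₂ := by
  have h := Wirt.integral_sum (μ := μ) (fun i : Fin d₁ × Fin d₁ × Fin d₂ =>
    (Wirt.star_z o i.2.1 i.2.2).mul (Wirt.rho o i.2.1 i.1))
    (fun i => finProdFinEquiv (i.1, i.2.2))
  have e1 : ∀ U, T2 o U = ∑ i : Fin d₁ × Fin d₁ × Fin d₂, z o U i.1 i.2.2 *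
      (star (z o U i.2.1 i.2.2) * rho U o i.2.1 i.1) := by
    intro U
    simp only [Fintype.sum_prod_type, T2]
    refine Finset.sum_congr rfl fun c _ => Finset.sum_congr rfl fun d _ => ?_
    simp only [← mul_assoc, ← Finset.sum_mul, sum_z]
  have e2 : ∀ U, ∑ i : Fin d₁ × Fin d₁ × Fin d₂,
      ((if i.2.1 = i.1 then (if i.2.2 = i.2.2 then 1 else 0) else 0) * rho U o i.2.1 i.1 +
        star (z o U i.2.1 i.2.2) * (if i.1 = i.1 then z o U i.2.1 i.2.2 else 0)) =
      (d₁ : ℂ) + d₂ := by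
    intro U
    simp only [Fintype.sum_prod_type, if_true, Finset.sum_add_distrib,
      mul_comm (star _), sum_z, rho_trace]
    simp [← Finset.mul_sum, rho_trace, add_comm]
  replace h := h.trans (integral_congr_ae (Filter.Eventually.of_forall fun U =>
    Eq.trans (by simp only [Equiv.symm_apply_apply]) (e2 U)))
  simp only [Fintype.card_fin, Nat.cast_mul, integral_const, probReal_univ, one_smul,
    zero_add] at h
  rw [← h]
  simp only [e1]
  rfl

/-- The recursion applied to `Tr ρ³ = ∑ ψ_{ck} · conj ψ_{dk} ρ_{de} ρ_{ec}`. -/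
lemma integral_T3 (o : Fin (d₁ * d₂)) :
    ((d₁ : ℂ) * d₂ + 2) * ∫ U, T3 o U ∂μ = (d₁ + d₂) * (∫ U, T2 o U ∂μ) + 1 := by
  have h := Wirt.integral_sum (μ := μ) (fun i : Fin d₁ × Fin d₁ × Fin d₁ × Fin d₂ =>
    (Wirt.star_z o i.2.1 i.2.2.2).mul ((Wirt.rho o i.2.1 i.2.2.1).mul (Wirt.rho o i.2.2.1 i.1)))
    (fun i => finProdFinEquiv (i.1, i.2.2.2))
  have e1 : ∀ U, T3 o U = ∑ i : Fin d₁ × Fin d₁ × Fin d₁ × Fin d₂, z o U i.1 i.2.2.2 *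
      (star (z o U i.2.1 i.2.2.2) * (rho U o i.2.1 i.2.2.1 * rho U o i.2.2.1 i.1)) := by
    intro U
    simp only [Fintype.sum_prod_type, T3]
    refine Finset.sum_congr rfl fun c _ => Finset.sum_congr rfl fun d _ =>
      Finset.sum_congr rfl fun e _ => ?_
    simp only [← mul_assoc, ← Finset.sum_mul, sum_z]
  have e2 : ∀ U, ∑ i : Fin d₁ × Fin d₁ × Fin d₁ × Fin d₂,
      ((if i.2.1 = i.1 then (if i.2.2.2 = i.2.2.2 then 1 else 0) else 0) *
          (rho U o i.2.1 i.2.2.1 * rho U o i.2.2.1 i.1) +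
        star (z o U i.2.1 i.2.2.2) *
          ((if i.2.2.1 = i.1 then z o U i.2.1 i.2.2.2 else 0) * rho U o i.2.2.1 i.1 +
            rho U o i.2.1 i.2.2.1 * (if i.1 = i.1 then z o U i.2.2.1 i.2.2.2 else 0))) =
      ((d₁ : ℂ) + d₂) * T2 o U + 1 := by
    intro U
    have inner : ∀ c d e : Fin d₁, ∑ k : Fin d₂,
        ((if d = c then 1 else 0) * (rho U o d e * rho U o e c) +
          star (z o U d k) * ((if e = c then z o U d k else 0) * rho U o e c +
            rho U o d e * z o U e k)) =
        (if d = c then (d₂ : ℂ) * (rho U o d e * rho U o e c) else 0) +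
          (if e = c then rho U o d d * rho U o e c else 0) + rho U o e d * rho U o d e := by
      intro c d e
      rw [← sum_z o U d d, ← sum_z o U e d, Finset.sum_mul, Finset.sum_mul, add_assoc,
        Finset.sum_add_distrib]
      congr 1
      · by_cases h : d = c <;> simp [h]
      · by_cases h : e = c
        · simp only [h, if_true]
          rw [← Finset.sum_add_distrib]
          exact Finset.sum_congr rfl fun k _ => by ring
        · simp only [h, if_false, zero_add, zero_mul]
          exact Finset.sum_congr rfl fun k _ => by ring
    simp only [Fintype.sum_prod_type, if_true, inner]
    simp only [Finset.sum_add_distrib]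
    have s1 : ∑ c : Fin d₁, ∑ d, ∑ e,
        (if d = c then (d₂ : ℂ) * (rho U o d e * rho U o e c) else 0) = d₂ * T2 o U := by
      simp [Finset.sum_ite_irrel, T2, Finset.mul_sum]
    have s2 : ∑ c : Fin d₁, ∑ d, ∑ e,
        (if e = c then rho U o d d * rho U o e c else 0) = 1 := by
      simp [← Finset.sum_mul, rho_trace]
    have s3 : ∑ c : Fin d₁, ∑ d, ∑ e, rho U o e d * rho U o d e = d₁ * T2 o U := by
      rw [Finset.sum_comm' (t' := Finset.univ) (s' := fun _ => Finset.univ) (by simp)]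
      simp [T2, Finset.mul_sum, mul_comm (rho U o _ _) (rho U o _ _)]
    rw [s1, s2, s3]
    ring
  replace h := h.trans (integral_congr_ae (Filter.Eventually.of_forall fun U =>
    Eq.trans (by simp only [Equiv.symm_apply_apply]) (e2 U)))
  simp only [Fintype.card_fin, Nat.cast_mul, zero_add] at h
  have hc : Continuous fun U => ((d₁ : ℂ) + d₂) * T2 o U :=
    continuous_const.mul (Wirt.T2 o).continuous
  rw [integral_add (continuous_integrable μ hc) (integrable_const _), integral_const_mul,
    integral_const, probReal_univ, one_smul, one_add_one_eq_two] at h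
  rw [← h]
  simp only [e1]
  rfl

/-- The recursion applied to `(Tr ρ²)² = ∑ ψ_{ck} · conj ψ_{dk} ρ_{dc} Tr ρ²`. -/
lemma integral_T2_sq (o : Fin (d₁ * d₂)) :
    ((d₁ : ℂ) * d₂ + 3) * ∫ U, T2 o U ^ 2 ∂μ =
      (d₁ + d₂) * (∫ U, T2 o U ∂μ) + 2 * ∫ U, T3 o U ∂μ := by
  have h := Wirt.integral_sum (μ := μ) (fun i : Fin d₁ × Fin d₁ × Fin d₂ =>
    (Wirt.star_z o i.2.1 i.2.2).mul ((Wirt.rho o i.2.1 i.1).mul (Wirt.T2 o)))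
    (fun i => finProdFinEquiv (i.1, i.2.2))
  have e1 : ∀ U, T2 o U ^ 2 = ∑ i : Fin d₁ × Fin d₁ × Fin d₂, z o U i.1 i.2.2 *
      (star (z o U i.2.1 i.2.2) * (rho U o i.2.1 i.1 * T2 o U)) := by
    intro U
    simp only [Fintype.sum_prod_type, sq]
    conv_lhs => enter [1]; rw [T2]
    simp only [Finset.sum_mul]
    refine Finset.sum_congr rfl fun c _ => Finset.sum_congr rfl fun d _ => ?_
    simp only [← mul_assoc, ← Finset.sum_mul, sum_z]
  have e2 : ∀ U, ∑ i : Fin d₁ × Fin d₁ × Fin d₂,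
      ((if i.2.1 = i.1 then (if i.2.2 = i.2.2 then 1 else 0) else 0) * (rho U o i.2.1 i.1 * T2 o U) +
        star (z o U i.2.1 i.2.2) *
          ((if i.1 = i.1 then z o U i.2.1 i.2.2 else 0) * T2 o U +
            rho U o i.2.1 i.1 * (2 * ∑ f, z o U f i.2.2 * rho U o i.1 f))) =
      ((d₁ : ℂ) + d₂) * T2 o U + 2 * T3 o U := by
    intro U
    have inner : ∀ c d : Fin d₁, ∑ k : Fin d₂,
        ((if d = c then 1 else 0) * (rho U o d c * T2 o U) +
          star (z o U d k) * (z o U d k * T2 o U +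
            rho U o d c * (2 * ∑ f, z o U f k * rho U o c f))) =
        (if d = c then (d₂ : ℂ) * (rho U o d c * T2 o U) else 0) +
          rho U o d d * T2 o U + 2 * ∑ f, rho U o d c * (rho U o c f * rho U o f d) := by
      intro c d
      have s : ∑ f, rho U o d c * (rho U o c f * rho U o f d) =
          ∑ k, ∑ f, rho U o d c * (rho U o c f * (z o U f k * star (z o U d k))) := by
        rw [Finset.sum_comm]
        simp only [← sum_z o U _ d, Finset.mul_sum]
      rw [s, ← sum_z o U d d, Finset.sum_mul, add_assoc, Finset.sum_add_distrib, Finset.mul_sum]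
      congr 1
      · by_cases h : d = c <;> simp [h]
      · rw [← Finset.sum_add_distrib]
        refine Finset.sum_congr rfl fun k _ => ?_
        simp only [mul_add, Finset.mul_sum]
        congr 1
        · ring
        · exact Finset.sum_congr rfl fun f _ => by ring
    simp only [Fintype.sum_prod_type, if_true, inner]
    simp only [Finset.sum_add_distrib]
    have s1 : ∑ c : Fin d₁, ∑ d,
        (if d = c then (d₂ : ℂ) * (rho U o d c * T2 o U) else 0) = d₂ * T2 o U := by
      simp [← Finset.mul_sum, ← Finset.sum_mul, rho_trace]
    have s2 : ∑ c : Fin d₁, ∑ d, rho U o d d * T2 o U = d₁ * T2 o U := by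
      simp [← Finset.sum_mul, rho_trace]
    have s3 : ∑ c : Fin d₁, ∑ d, 2 * ∑ f, rho U o d c * (rho U o c f * rho U o f d) =
        2 * T3 o U := by
      rw [Finset.sum_comm]
      simp only [T3, Finset.mul_sum]
    rw [s1, s2, s3]
    ring
  replace h := h.trans (integral_congr_ae (Filter.Eventually.of_forall fun U =>
    Eq.trans (by simp only [Equiv.symm_apply_apply]) (e2 U)))
  simp only [Fintype.card_fin, Nat.cast_mul, zero_add] at h
  have hc : Continuous fun U => ((d₁ : ℂ) + d₂) * T2 o U :=
    continuous_const.mul (Wirt.T2 o).continuous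
  have hc' : Continuous fun U => 2 * T3 o U := continuous_const.mul (T3_continuous o)
  rw [integral_add (continuous_integrable μ hc) (continuous_integrable μ hc'), integral_const_mul,
    integral_const_mul, show (1 : ℂ) + 2 = 3 by norm_num] at h
  rw [← h]
  simp only [e1]
  rfl

/-! ### The overlap as a quadratic form -/

/-- `B ⊗ 1` acting on `ℂ^(d₁d₂)`, in the index convention of `finProdFinEquiv`. -/
def ampl (B : Matrix (Fin d₁) (Fin d₁) ℂ) : Matrix (Fin (d₁ * d₂)) (Fin (d₁ * d₂)) ℂ :=
  (kronecker B (1 : Matrix (Fin d₂) (Fin d₂) ℂ)).submatrix finProdFinEquiv.symm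
    finProdFinEquiv.symm

lemma sum_pair (f : Fin (d₁ * d₂) → ℂ) :
    ∑ x, f x = ∑ a : Fin d₁, ∑ k : Fin d₂, f (finProdFinEquiv (a, k)) := by
  rw [← finProdFinEquiv.sum_comp, Fintype.sum_prod_type]

lemma ampl_mul (B C : Matrix (Fin d₁) (Fin d₁) ℂ) :
    ampl (d₂ := d₂) (B * C) = ampl B * ampl C := by
  have h := Matrix.mul_kronecker_mul B C (1 : Matrix (Fin d₂) (Fin d₂) ℂ)
    (1 : Matrix (Fin d₂) (Fin d₂) ℂ)
  rw [Matrix.one_mul] at h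
  rw [ampl, ampl, ampl, Matrix.submatrix_mul_equiv]
  exact congrArg (fun M => M.submatrix finProdFinEquiv.symm finProdFinEquiv.symm) h

lemma ampl_trace (B : Matrix (Fin d₁) (Fin d₁) ℂ) :
    (ampl (d₂ := d₂) B).trace = d₂ * B.trace := by
  rw [ampl, Matrix.trace, sum_pair]
  simp [Matrix.trace, Finset.mul_sum]

/-- `⟨u_i, (B ⊗ 1) u_i⟩ = Tr(B ρ_i)`, the defining property of the partial trace. -/
lemma ampl_form (B : Matrix (Fin d₁) (Fin d₁) ℂ) (U : Matrix.unitaryGroup (Fin (d₁ * d₂)) ℂ)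
    (i : Fin (d₁ * d₂)) :
    ((U : Matrix (Fin (d₁ * d₂)) (Fin (d₁ * d₂)) ℂ)ᴴ * ampl (d₂ := d₂) B *
      (U : Matrix (Fin (d₁ * d₂)) (Fin (d₁ * d₂)) ℂ)) i i = (B * rho U i).trace := by
  rw [mul_mul_apply_eq_sum, Matrix.trace_mul_comm]
  simp only [sum_pair, ampl, Matrix.submatrix_apply,
    Equiv.symm_apply_apply, kronecker, Matrix.kroneckerMap_apply, Matrix.one_apply, Matrix.trace,
    Matrix.diag, Matrix.mul_apply, rho, Matrix.of_apply, Finset.sum_mul, mul_ite, ite_mul,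
    mul_one, mul_zero, zero_mul, Finset.sum_ite_eq', Finset.mem_univ, if_true]
  refine Finset.sum_congr rfl fun a _ => ?_
  rw [Finset.sum_comm]
  refine Finset.sum_congr rfl fun b _ => Finset.sum_congr rfl fun k _ => ?_
  rw [starRingEnd_apply]
  ring

lemma ampl_rho_colNull (o x y : Fin (d₁ * d₂)) : ColNull o (fun U => ampl (rho U o) x y) :=
  (ColNull.sum Finset.univ fun k : Fin d₂ =>
    (ColNull.entry o (finProdFinEquiv ((finProdFinEquiv.symm x).1, k))).mul
      (ColNull.star_entry o (finProdFinEquiv ((finProdFinEquiv.symm y).1, k)))).mul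
    (ColNull.const _)

lemma rho_mul_trace (o : Fin (d₁ * d₂)) (U : Matrix.unitaryGroup (Fin (d₁ * d₂)) ℂ) :
    (rho U o * rho U o).trace = T2 o U := rfl

lemma rho_mul_mul_trace (o : Fin (d₁ * d₂)) (U : Matrix.unitaryGroup (Fin (d₁ * d₂)) ℂ) :
    (rho U o * rho U o * rho U o).trace = T3 o U := by
  rw [Matrix.mul_assoc]
  simp only [Matrix.trace, Matrix.diag, Matrix.mul_apply, Finset.mul_sum]
  rfl

/-- The expectation of `Tr(ρ₀ρ₁) Tr(ρ₀ρ₂)` in terms of the moments of column `o` alone, where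
`M = d₁d₂ - 1`. -/
lemma overlap_average {o i₁ i₂ : Fin (d₁ * d₂)} (h₁ : i₁ ≠ o) (h₂ : i₂ ≠ o) (h₁₂ : i₁ ≠ i₂) :
    let M : ℂ := (d₁ : ℂ) * d₂ - 1
    M * (M ^ 2 - 1) * ∫ U, (rho U o * rho U i₁).trace * (rho U o * rho U i₂).trace ∂μ =
      M * (d₂ ^ 2 - 2 * d₂ * (∫ U, T2 o U ∂μ) + ∫ U, T2 o U ^ 2 ∂μ) -
      (d₂ * (∫ U, T2 o U ∂μ) - 2 * (∫ U, T3 o U ∂μ) + ∫ U, T2 o U ^ 2 ∂μ) := by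
  intro M
  have h := two_column_average (μ := μ) h₁ h₂ h₁₂ (ampl_rho_colNull (d₁ := d₁) (d₂ := d₂) o)
  have hQ : ∀ i U, Q (fun U => ampl (rho U o)) i i U = (rho U o * rho U i).trace :=
    fun i U => ampl_form _ U i
  have hQ2 : ∀ U, Q (fun U => ampl (rho U o * rho U o)) o o U = T3 o U := fun U =>
    (ampl_form _ U o).trans (rho_mul_mul_trace o U)
  have ht : ∀ U : Matrix.unitaryGroup (Fin (d₁ * d₂)) ℂ, (rho U o).trace = 1 := rho_trace o
  simp only [hQ, ← ampl_mul] at h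
  simp only [hQ2, ampl_trace, ht, rho_mul_trace, Fintype.card_fin, Nat.cast_mul, mul_one] at h
  have c2 : Continuous fun U => T2 o U := (Wirt.T2 o).continuous
  have c22 : Continuous fun U => T2 o U ^ 2 := c2.pow 2
  have c3 : Continuous fun U => T3 o U := T3_continuous o
  have i2 := continuous_integrable μ c2
  have i22 := continuous_integrable μ c22
  have i3 := continuous_integrable μ c3
  have l1 : Integrable (fun U => (d₂ : ℂ) ^ 2 - 2 * d₂ * T2 o U) μ :=
    (integrable_const _).sub (i2.const_mul _)
  have l2 : Integrable (fun U => (d₂ : ℂ) * T2 o U - 2 * T3 o U) μ :=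
    (i2.const_mul _).sub (i3.const_mul _)
  have r1 : ∫ U, ((d₂ : ℂ) - T2 o U) ^ 2 ∂μ =
      d₂ ^ 2 - 2 * d₂ * (∫ U, T2 o U ∂μ) + ∫ U, T2 o U ^ 2 ∂μ := by
    simp only [sub_sq]
    rw [integral_add l1 i22,
      integral_sub (integrable_const _) (i2.const_mul _), integral_const_mul, integral_const,
      probReal_univ, one_smul]
  have r2 : ∫ U, ((d₂ : ℂ) * T2 o U - 2 * T3 o U + T2 o U ^ 2) ∂μ =
      d₂ * (∫ U, T2 o U ∂μ) - 2 * (∫ U, T3 o U ∂μ) + ∫ U, T2 o U ^ 2 ∂μ := by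
    rw [integral_add l2 i22,
      integral_sub (i2.const_mul _) (i3.const_mul _), integral_const_mul, integral_const_mul]
  rw [r1, r2] at h
  exact h

end Moments

/-- `E[Tr(ρ₀ρ₁) · Tr(ρ₀ρ₂)]` for a Haar-random unitary of size `d₁d₂ ≥ 3`. -/
theorem stmt7 (d₁ d₂ : ℕ) (hd₁ : 0 < d₁) (hd₂ : 0 < d₂) (hd : 3 ≤ d₁ * d₂)
    (μ : Measure (Matrix.unitaryGroup (Fin (d₁ * d₂)) ℂ))
    [μ.IsHaarMeasure] [IsProbabilityMeasure μ] :
    let i0 : Fin (d₁ * d₂) := ⟨0, by omega⟩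
    let i1 : Fin (d₁ * d₂) := ⟨1, by omega⟩
    let i2 : Fin (d₁ * d₂) := ⟨2, by omega⟩
    ∫ U, Matrix.trace (rho U i0 * rho U i1) * Matrix.trace (rho U i0 * rho U i2) ∂μ =
      (((d₂ : ℂ) ^ 2 - 1) * ((d₁ : ℂ) * ((d₁ : ℂ) * ((d₂ : ℂ) * ((d₁ : ℂ) * (3 * (d₂ : ℂ) ^ 2 + (d₁ : ℂ) * ((d₂ : ℂ) ^ 2 - 1) * (d₂ : ℂ) - 4) - 3 * (d₂ : ℂ)) + 2) - 8 * (d₂ : ℂ)) - 2)) / ((d₁ : ℂ) * (d₂ : ℂ) * ((d₁ : ℂ) * (d₂ : ℂ) - 2) * ((d₁ : ℂ) * (d₂ : ℂ) - 1) * ((d₁ : ℂ) * (d₂ : ℂ) + 1) * ((d₁ : ℂ) * (d₂ : ℂ) + 2) * ((d₁ : ℂ) * (d₂ : ℂ) + 3)) := by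
  intro i0 i1 i2
  have h := overlap_average (μ := μ) (o := i0) (i₁ := i1) (i₂ := i2) (by simp [i0, i1])
    (by simp [i0, i2]) (by simp [i1, i2])
  have h2 := integral_T2 (μ := μ) i0
  have h3 := integral_T3 (μ := μ) i0
  have h22 := integral_T2_sq (μ := μ) i0
  -- The factors `d₁ d₂ - k` of the denominators do not vanish because `d₁ d₂ ≥ 3`.
  have hne : ∀ k : ℤ, k < 3 → (d₁ : ℂ) * d₂ - k ≠ 0 := fun k hk => by
    rw [sub_ne_zero]
    have : (d₁ : ℤ) * d₂ ≠ k := by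
      have : (3 : ℤ) ≤ d₁ * d₂ := by exact_mod_cast hd
      omega
    exact_mod_cast this
  have n0 : (d₁ : ℂ) * d₂ ≠ 0 := by simpa using hne 0 (by norm_num)
  have n1 : (d₁ : ℂ) * d₂ - 1 ≠ 0 := by simpa using hne 1 (by norm_num)
  have n2 : (d₁ : ℂ) * d₂ - 2 ≠ 0 := by simpa using hne 2 (by norm_num)
  have p1 : (d₁ : ℂ) * d₂ + 1 ≠ 0 := by simpa using hne (-1) (by norm_num)
  have p2 : (d₁ : ℂ) * d₂ + 2 ≠ 0 := by simpa using hne (-2) (by norm_num)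
  have p3 : (d₁ : ℂ) * d₂ + 3 ≠ 0 := by simpa using hne (-3) (by norm_num)
  have a0 : (d₁ : ℂ) ≠ 0 := left_ne_zero_of_mul n0
  have b0 : (d₂ : ℂ) ≠ 0 := right_ne_zero_of_mul n0
  generalize (∫ U, T2 i0 U ∂μ) = x at *
  generalize (∫ U, T3 i0 U ∂μ) = y at *
  generalize (∫ U, T2 i0 U ^ 2 ∂μ) = w at *
  generalize (∫ U, Matrix.trace (rho U i0 * rho U i1) * Matrix.trace (rho U i0 * rho U i2) ∂μ) = v
    at *
  generalize (d₁ : ℂ) = a at *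
  generalize (d₂ : ℂ) = b at *
  dsimp only at h
  obtain rfl : x = (a + b) / (a * b + 1) := by rw [eq_div_iff p1]; linear_combination h2
  obtain rfl : y = ((a + b) * ((a + b) / (a * b + 1)) + 1) / (a * b + 2) := by
    rw [eq_div_iff p2]; linear_combination h3
  obtain rfl := eq_div_of_mul_eq p3 ((mul_comm _ _).trans h22)
  have n3 : (a * b - 1) * ((a * b - 1) ^ 2 - 1) ≠ 0 := by
    rw [show (a * b - 1) * ((a * b - 1) ^ 2 - 1) = (a * b - 1) * (a * b * (a * b - 2)) by ring]
    exact mul_ne_zero n1 (mul_ne_zero n0 n2)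
  refine mul_left_cancel₀ n3 (h.trans ?_)
  field_simp
  ring
end
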